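/- Let k ≥ 1 be a fixed integer. Suppose p_s = o(1), K_n ≥ 2 for all sufficiently large n, and p_e = (ln n + (k−1)·ln ln n + α_n)/n with lim_{n→∞} α_n = −∞. Then for any two distinct nodes v_x, v_y of 𝔾_on(n,K_n,P_n,p_n): (a) if there exists ε > 0 with n·p_e > ε for all sufficiently large n, then for any fixed nonnegative integer ℓ, P[D_{x,ℓ} ∩ D_{y,ℓ}] ∼ (ℓ!)^{−2}·(p_e·n)^{2ℓ}·e^{−2·p_e·n}; (b) P[D_{x,0} ∩ D_{y,0}] ∼ e^{−2·p_e·n}. -/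

import Mathlib

open MeasureTheory Filter Asymptotics
open scoped ENNReal

noncomputable section

/-- Key rings: `K`-element subsets of a key pool of size `P`. -/
abbrev KeyRing (P K : ℕ) : Type := {s : Finset (Fin P) // s.card = K}

instance (P K : ℕ) : MeasurableSpace (KeyRing P K) := ⊤

/-- The uniform probability measure on key rings. -/
def uniformKeyMeasure (P K : ℕ) : Measure (KeyRing P K) :=
  (Fintype.card (KeyRing P K) : ℝ≥0∞)⁻¹ • (Measure.count : Measure (KeyRing P K))

/-- The Bernoulli measure with parameter `p` on `Bool`. -/
def bern (p : ℝ) : Measure Bool :=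
  ENNReal.ofReal p • Measure.dirac true + ENNReal.ofReal (1 - p) • Measure.dirac false

/-- Sample space underlying `𝔾_on(n, K, P, p)`: independent key rings for the `n`
nodes together with independent on/off channel states for each pair of nodes. -/
abbrev GonSpace (n K P : ℕ) : Type :=
  (Fin n → KeyRing P K) × (Sym2 (Fin n) → Bool)

/-- The probability measure of the model `𝔾_on(n, K, P, p)`: the key rings of the
`n` nodes are independent and uniform, and the channels are independent
Bernoulli(`p`) variables, independent of the key rings. -/
def gonMeasure (n K P : ℕ) (p : ℝ) : Measure (GonSpace n K P) :=
  (Measure.pi fun _ : Fin n => uniformKeyMeasure P K).prod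
    (Measure.pi fun _ : Sym2 (Fin n) => bern p)

/-- The random graph `𝔾_on`: an edge is present iff the key rings intersect and the
channel between the two nodes is on. -/
def gonGraph {n K P : ℕ} (ω : GonSpace n K P) : SimpleGraph (Fin n) where
  Adj i j := i ≠ j ∧ ((ω.1 i).1 ∩ (ω.1 j).1).Nonempty ∧ ω.2 s(i, j) = true
  symm := by
    constructor
    rintro i j ⟨h1, h2, h3⟩
    exact ⟨h1.symm, by rwa [Finset.inter_comm], by rwa [Sym2.eq_swap]⟩
  loopless := ⟨fun i h => h.1 rfl⟩

/-- The random key graph `G(n, K, P)`: an edge is present iff the key rings intersect. -/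
def rkgGraph {n K P : ℕ} (ω : Fin n → KeyRing P K) : SimpleGraph (Fin n) where
  Adj i j := i ≠ j ∧ ((ω i).1 ∩ (ω j).1).Nonempty
  symm := by
    constructor
    rintro i j ⟨h1, h2⟩
    exact ⟨h1.symm, by rwa [Finset.inter_comm]⟩
  loopless := ⟨fun i h => h.1 rfl⟩

/-- The probability measure of the random key graph model. -/
def rkgMeasure (n K P : ℕ) : Measure (Fin n → KeyRing P K) :=
  Measure.pi fun _ : Fin n => uniformKeyMeasure P K

/-- Degree of a vertex. -/
def gDeg {V : Type*} (G : SimpleGraph V) (v : V) : ℕ := Nat.card {w // G.Adj v w}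

/-- Minimum vertex degree. -/
def minDeg {V : Type*} (G : SimpleGraph V) : ℕ := sInf (Set.range (gDeg G))

/-- A graph is `k`-connected if it remains connected after the removal of any
`k - 1` of its vertices. -/
def KConnected {V : Type*} (G : SimpleGraph V) (k : ℕ) : Prop :=
  ∀ S : Finset V, S.card ≤ k - 1 → (G.induce ((S : Set V)ᶜ)).Connected

/-- Vertex connectivity: the least number of vertices whose deletion disconnects
the graph. -/
def vertexConn {V : Type*} (G : SimpleGraph V) : ℕ :=
  sInf {m | ∃ S : Finset V, S.card = m ∧ ¬ (G.induce ((S : Set V)ᶜ)).Connected}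

/-- `p_s`: the probability that two key rings share at least one key. -/
def psf (K P : ℕ) : ℝ :=
  if 2 * K ≤ P then 1 - (Nat.choose (P - K) K : ℝ) / (Nat.choose P K : ℝ) else 1

/-- `p_e = p · p_s`: the probability of an edge in `𝔾_on`. -/
def pef (K P : ℕ) (p : ℝ) : ℝ := p * psf K P

/-- The event `D_{x,ℓ}` that the node with index `x` has degree exactly `ℓ`. -/
def degEvent (n K P : ℕ) (x ℓ : ℕ) : Set (GonSpace n K P) :=
  {ω | ∃ hx : x < n, gDeg (gonGraph ω) ⟨x, hx⟩ = ℓ}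

/-- The event `E_{xy}` that the edge between the nodes with indices `x`, `y` is present. -/
def edgeEvent (n K P : ℕ) (x y : ℕ) : Set (GonSpace n K P) :=
  {ω | ∃ (hx : x < n) (hy : y < n), (gonGraph ω).Adj ⟨x, hx⟩ ⟨y, hy⟩}

/-- The event that the key rings of nodes `x` and `y` share exactly `u` keys. -/
def interCardEvent (n K P : ℕ) (x y u : ℕ) : Set (GonSpace n K P) :=
  {ω | ∃ (hx : x < n) (hy : y < n), ((ω.1 ⟨x, hx⟩).1 ∩ (ω.1 ⟨y, hy⟩).1).card = u}

/-- The event `K_{xy}` that the key rings of nodes `x` and `y` share at least one key. -/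
def keyShareEvent (n K P : ℕ) (x y : ℕ) : Set (GonSpace n K P) :=
  {ω | ∃ (hx : x < n) (hy : y < n), ((ω.1 ⟨x, hx⟩).1 ∩ (ω.1 ⟨y, hy⟩).1).Nonempty}

/-- `r_n = min(⌊P/K⌋, ⌊n/2⌋)`. -/
def rn (n K P : ℕ) : ℕ := min (P / K) (n / 2)

/-- The threshold array `J`. -/
def Jarr (n K P : ℕ) (ε lam mu : ℝ) (i : ℕ) : ℕ :=
  if i ≤ rn n K P then max ⌊(1 + ε) * (K : ℝ)⌋₊ ⌊lam * (K : ℝ) * (i : ℝ)⌋₊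
  else ⌊mu * (P : ℝ)⌋₊

/-- The event `𝓔(J)`: some set `T` of at least two nodes has a union of key rings of
size at most `J_{|T|}`. -/
def EJ (n K P : ℕ) (ε lam mu : ℝ) : Set (GonSpace n K P) :=
  {ω | ∃ T : Finset (Fin n), 2 ≤ T.card ∧
    (T.biUnion fun i => (ω.1 i).1).card ≤ Jarr n K P ε lam mu T.card}

lemma Nat.descFactorial_mul_pow_le {a b : ℕ} (hab : a ≤ b) (d : ℕ) :
    a.descFactorial d * b ^ d ≤ b.descFactorial d * a ^ d := by
  induction d with
  | zero => simp
  | succ d ih =>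
    have h : (a - d) * b ≤ (b - d) * a := by
      rcases le_total a d with h | h
      · simp [Nat.sub_eq_zero_of_le h]
      · obtain ⟨c, rfl⟩ := Nat.exists_eq_add_of_le h
        obtain ⟨e, rfl⟩ := Nat.exists_eq_add_of_le hab
        have : d + c + e - d = c + e := by omega
        rw [this, Nat.add_sub_cancel_left]
        nlinarith [Nat.zero_le (d * e), Nat.zero_le (e * c)]
    calc a.descFactorial (d + 1) * b ^ (d + 1)
        = ((a - d) * b) * (a.descFactorial d * b ^ d) := by
          rw [Nat.descFactorial_succ]; ring
      _ ≤ ((b - d) * a) * (b.descFactorial d * a ^ d) := Nat.mul_le_mul h ih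
      _ = b.descFactorial (d + 1) * a ^ (d + 1) := by
          rw [Nat.descFactorial_succ]; ring

lemma Nat.choose_sub_mul_pow_le {P K d : ℕ} (hd : d ≤ K) (hK : K ≤ P) :
    (P - d).choose (K - d) * P ^ d ≤ P.choose K * K ^ d := by
  have h1 := Nat.choose_mul (n := P) (k := K) (s := d) hd
  have h2 := Nat.descFactorial_mul_pow_le hK d
  have hpos : 0 < P.descFactorial d := Nat.pos_of_ne_zero fun h => by
    have := Nat.descFactorial_eq_zero_iff_lt.1 h
    omega
  refine Nat.le_of_mul_le_mul_left ?_ hpos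
  calc P.descFactorial d * ((P - d).choose (K - d) * P ^ d)
      = d.factorial * (P.choose d * (P - d).choose (K - d)) * P ^ d := by
        rw [Nat.descFactorial_eq_factorial_mul_choose]; ring
    _ = P.choose K * (K.descFactorial d * P ^ d) := by
        rw [← h1, Nat.descFactorial_eq_factorial_mul_choose]; ring
    _ ≤ P.choose K * (P.descFactorial d * K ^ d) := Nat.mul_le_mul_left _ h2
    _ = P.descFactorial d * (P.choose K * K ^ d) := by ring

section KeyRings

open Finset

variable {P K : ℕ}

/-- Two key rings share a key. -/
abbrev hits (s r : KeyRing P K) : Prop := (s.1 ∩ r.1).Nonempty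

lemma card_keyRing (P K : ℕ) : Fintype.card (KeyRing P K) = P.choose K := by
  simp

lemma card_keyRing_filter (Q : Finset (Fin P) → Prop) [DecidablePred Q] :
    #{r : KeyRing P K | Q r.1} = #{r ∈ powersetCard K (univ : Finset (Fin P)) | Q r} := by
  rw [← card_map (Function.Embedding.subtype _)]
  congr 1
  ext r
  simp only [Finset.mem_map, mem_filter, mem_univ, true_and, Function.Embedding.subtype_apply,
    mem_powersetCard, subset_univ]
  constructor
  · rintro ⟨a, ha, rfl⟩
    exact ⟨a.2, ha⟩
  · rintro ⟨h1, h2⟩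
    exact ⟨⟨r, h1⟩, h2, rfl⟩

lemma card_keyRing_pos (hKP : K ≤ P) : (0 : ℝ) < Fintype.card (KeyRing P K) := by
  rw [card_keyRing]; exact_mod_cast Nat.choose_pos hKP

lemma card_keyRing_subset_le (hKP : K ≤ P) (hP : 0 < P) (D : Finset (Fin P)) :
    (#{r : KeyRing P K | D ⊆ r.1} : ℝ) ≤
      ((K : ℝ) / P) ^ #D * Fintype.card (KeyRing P K) := by
  rcases lt_or_ge K #D with h | h
  · have : #{r : KeyRing P K | D ⊆ r.1} = 0 := by
      rw [card_eq_zero, filter_eq_empty_iff]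
      intro r _ hr
      have := card_le_card hr
      rw [r.2] at this
      omega
    rw [this, Nat.cast_zero]
    positivity
  · rw [card_keyRing_filter, card_filter_powersetCard_subset _ _ _ (subset_univ _) h,
      card_keyRing, card_univ, Fintype.card_fin]
    have := Nat.choose_sub_mul_pow_le h hKP
    have hP' : (0 : ℝ) < (P : ℝ) ^ #D := by positivity
    rw [div_pow, div_mul_eq_mul_div, le_div_iff₀ hP']
    calc ((P - #D).choose (K - #D) : ℝ) * (P : ℝ) ^ #D ≤ P.choose K * (K : ℝ) ^ #D := by
          exact_mod_cast this
      _ = _ := by ring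

lemma psf_eq (P K : ℕ) : psf K P = 1 - ((P - K).choose K : ℝ) / P.choose K := by
  unfold psf
  split_ifs with h
  · rfl
  · rw [Nat.choose_eq_zero_of_lt (by omega : P - K < K)]; simp

lemma psf_nonneg (P K : ℕ) : 0 ≤ psf K P := by
  rw [psf_eq, sub_nonneg]
  apply div_le_one_of_le₀ _ (Nat.cast_nonneg _)
  exact_mod_cast Nat.choose_le_choose K (Nat.sub_le P K)

lemma card_not_hits (hKP : K ≤ P) (s : KeyRing P K) :
    (#{r : KeyRing P K | ¬ hits s r} : ℝ) = (1 - psf K P) * Fintype.card (KeyRing P K) := by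
  have h : #{r : KeyRing P K | ¬ hits s r} = (P - K).choose K := by
    rw [card_keyRing_filter (fun r => ¬ (s.1 ∩ r).Nonempty)]
    have : {r ∈ powersetCard K (univ : Finset (Fin P)) | ¬ (s.1 ∩ r).Nonempty}
        = powersetCard K s.1ᶜ := by
      ext r
      simp only [mem_filter, mem_powersetCard, subset_univ, true_and, not_nonempty_iff_eq_empty,
        ← disjoint_iff_inter_eq_empty]
      rw [and_comm, disjoint_comm, ← subset_compl_iff_disjoint_right]
    rw [this, card_powersetCard, card_compl, Fintype.card_fin, s.2]
  have hpos := card_keyRing_pos hKP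
  rw [h, psf_eq, card_keyRing] at *
  field_simp
  ring

lemma card_hits (hKP : K ≤ P) (s : KeyRing P K) :
    (#{r : KeyRing P K | hits s r} : ℝ) = psf K P * Fintype.card (KeyRing P K) := by
  have h1 := card_not_hits hKP s
  have h2 := card_filter_add_card_filter_not (s := (univ : Finset (KeyRing P K))) (hits s)
  rw [card_univ] at h2
  have h3 : (#{r : KeyRing P K | hits s r} : ℝ) + #{r : KeyRing P K | ¬ hits s r} =
    Fintype.card (KeyRing P K) := by exact_mod_cast h2
  linarith

/-- The probability that a random key ring meets both `s` and `t`. -/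
def bothProb (s t : KeyRing P K) : ℝ :=
  #{r : KeyRing P K | hits s r ∧ hits t r} / Fintype.card (KeyRing P K)

lemma bothProb_nonneg (s t : KeyRing P K) : 0 ≤ bothProb s t := by
  unfold bothProb; positivity

lemma bothProb_le_psf (hKP : K ≤ P) (s t : KeyRing P K) : bothProb s t ≤ psf K P := by
  unfold bothProb
  rw [div_le_iff₀ (card_keyRing_pos hKP), ← card_hits hKP s]
  gcongr
  tauto

lemma sum_card_pair_subset_le (hKP : K ≤ P) (hP : 0 < P) (s t : KeyRing P K) :
    ∑ ab ∈ (s.1 ×ˢ t.1).filter (fun ab => ab.1 ≠ ab.2),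
        (#{r : KeyRing P K | {ab.1, ab.2} ⊆ r.1} : ℝ) ≤
      ((K : ℝ) ^ 2 / P) ^ 2 * Fintype.card (KeyRing P K) := by
  calc _ ≤ ∑ ab ∈ (s.1 ×ˢ t.1).filter (fun ab => ab.1 ≠ ab.2),
            ((K : ℝ) / P) ^ 2 * Fintype.card (KeyRing P K) :=
          sum_le_sum fun ab hab => by
            have h := card_keyRing_subset_le hKP hP {ab.1, ab.2}
            rwa [card_pair (mem_filter.1 hab).2] at h
    _ = #((s.1 ×ˢ t.1).filter (fun ab => ab.1 ≠ ab.2)) *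
            (((K : ℝ) / P) ^ 2 * Fintype.card (KeyRing P K)) := by
          rw [sum_const, nsmul_eq_mul]
    _ ≤ ((K : ℝ) * K) * (((K : ℝ) / P) ^ 2 * Fintype.card (KeyRing P K)) := by
          gcongr
          have := card_filter_le (s.1 ×ˢ t.1) (fun ab => ab.1 ≠ ab.2)
          rw [card_product, s.2, t.2] at this
          exact_mod_cast this
    _ = _ := by ring

lemma bothProb_le (hKP : K ≤ P) (hP : 0 < P) (s t : KeyRing P K) :
    bothProb s t ≤ #(s.1 ∩ t.1) * ((K : ℝ) / P) + ((K : ℝ) ^ 2 / P) ^ 2 := by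
  unfold bothProb
  have hM := card_keyRing_pos hKP
  rw [div_le_iff₀ hM]
  have hsub : ({r : KeyRing P K | hits s r ∧ hits t r} : Finset _) ⊆
      ((s.1 ∩ t.1).biUnion fun a => {r : KeyRing P K | {a} ⊆ r.1}) ∪
      ((s.1 ×ˢ t.1).filter (fun ab => ab.1 ≠ ab.2)).biUnion
        fun ab => {r : KeyRing P K | {ab.1, ab.2} ⊆ r.1} := by
    intro r hr
    simp only [mem_filter, mem_univ, true_and, hits] at hr
    obtain ⟨⟨a, ha⟩, ⟨b, hb⟩⟩ := hr
    rw [mem_inter] at ha hb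
    simp only [mem_union, mem_biUnion, mem_filter, mem_univ, true_and, mem_inter, mem_product,
      singleton_subset_iff, insert_subset_iff]
    by_cases hab : a = b
    · subst hab
      exact Or.inl ⟨a, ⟨ha.1, hb.1⟩, ha.2⟩
    · exact Or.inr ⟨(a, b), ⟨⟨ha.1, hb.1⟩, hab⟩, ha.2, hb.2⟩
  have hcard := (card_le_card hsub).trans (card_union_le _ _)
  have hcard' := hcard.trans (add_le_add card_biUnion_le card_biUnion_le)
  have hreal : (#{r : KeyRing P K | hits s r ∧ hits t r} : ℝ) ≤
      ∑ a ∈ s.1 ∩ t.1, (#{r : KeyRing P K | {a} ⊆ r.1} : ℝ) +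
      ∑ ab ∈ (s.1 ×ˢ t.1).filter (fun ab => ab.1 ≠ ab.2),
        (#{r : KeyRing P K | {ab.1, ab.2} ⊆ r.1} : ℝ) := by
    exact_mod_cast hcard'
  refine hreal.trans ?_
  rw [add_mul]
  refine add_le_add ?_ ?_
  · calc _ ≤ ∑ a ∈ s.1 ∩ t.1, ((K : ℝ) / P) * Fintype.card (KeyRing P K) :=
          sum_le_sum fun a _ => by simpa using card_keyRing_subset_le hKP hP {a}
      _ = _ := by rw [sum_const, nsmul_eq_mul]; ring
  · exact sum_card_pair_subset_le hKP hP s t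

lemma card_two_le_inter_le (hKP : K ≤ P) (hP : 0 < P) (s : KeyRing P K) :
    (#{r : KeyRing P K | 2 ≤ #(s.1 ∩ r.1)} : ℝ) ≤
      ((K : ℝ) ^ 2 / P) ^ 2 * Fintype.card (KeyRing P K) := by
  have hsub : ({r : KeyRing P K | 2 ≤ #(s.1 ∩ r.1)} : Finset _) ⊆
      ((s.1 ×ˢ s.1).filter (fun ab => ab.1 ≠ ab.2)).biUnion
        fun ab => {r : KeyRing P K | {ab.1, ab.2} ⊆ r.1} := by
    intro r hr
    simp only [mem_filter, mem_univ, true_and] at hr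
    obtain ⟨a, ha, b, hb, hab⟩ := one_lt_card.1 hr
    rw [mem_inter] at ha hb
    simp only [mem_biUnion, mem_filter, mem_univ, true_and, mem_product,
      singleton_subset_iff, insert_subset_iff]
    exact ⟨(a, b), ⟨⟨ha.1, hb.1⟩, hab⟩, ha.2, hb.2⟩
  have hcard' := (card_le_card hsub).trans card_biUnion_le
  have hreal : (#{r : KeyRing P K | 2 ≤ #(s.1 ∩ r.1)} : ℝ) ≤
      ∑ ab ∈ (s.1 ×ˢ s.1).filter (fun ab => ab.1 ≠ ab.2),
        (#{r : KeyRing P K | {ab.1, ab.2} ⊆ r.1} : ℝ) := by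
    exact_mod_cast hcard'
  exact hreal.trans (sum_card_pair_subset_le hKP hP s s)

lemma one_sub_psf_mul_le (hKP : K ≤ P) (hP : 0 < P) :
    (1 - psf K P) * (1 + (K : ℝ) ^ 2 / P) ≤ 1 := by
  have hPr : (0 : ℝ) < P := by exact_mod_cast hP
  have hc : (0 : ℝ) < P.choose K := by exact_mod_cast Nat.choose_pos hKP
  set a : ℝ := (K : ℝ) / P with ha
  have ha0 : 0 ≤ a := by positivity
  have ha1 : a ≤ 1 := div_le_one_of_le₀ (by exact_mod_cast hKP) hPr.le
  have h1 : 1 - psf K P ≤ (1 - a) ^ K := by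
    have h := Nat.descFactorial_mul_pow_le (Nat.sub_le P K) K
    rw [Nat.descFactorial_eq_factorial_mul_choose, Nat.descFactorial_eq_factorial_mul_choose,
      mul_assoc, mul_assoc] at h
    have h' := Nat.le_of_mul_le_mul_left h (Nat.factorial_pos K)
    have h'' : ((P - K).choose K : ℝ) * (P : ℝ) ^ K ≤ P.choose K * ((P : ℝ) - K) ^ K := by
      rw [← Nat.cast_sub hKP]; exact_mod_cast h'
    rw [psf_eq, sub_sub_cancel, div_le_iff₀ hc]
    have : 1 - a = ((P : ℝ) - K) / P := by rw [ha]; field_simp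
    rw [this, div_pow, div_mul_eq_mul_div, le_div_iff₀ (by positivity)]
    linarith
  have h2 : 1 + (K : ℝ) ^ 2 / P ≤ (1 + a) ^ K := by
    have := one_add_mul_le_pow (by linarith : (-2 : ℝ) ≤ a) K
    calc 1 + (K : ℝ) ^ 2 / P = 1 + K * a := by rw [ha]; ring
      _ ≤ _ := this
  calc (1 - psf K P) * (1 + (K : ℝ) ^ 2 / P) ≤ (1 - a) ^ K * (1 + a) ^ K := by
        apply mul_le_mul h1 h2 (by positivity)
        exact pow_nonneg (by linarith) _
    _ = (1 - a ^ 2) ^ K := by rw [← mul_pow]; ring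
    _ ≤ 1 := pow_le_one₀ (by nlinarith) (by nlinarith)

lemma sq_div_le_psf (hKP : K ≤ P) (hP : 0 < P) (h : psf K P ≤ 1 / 5) :
    (K : ℝ) ^ 2 / P ≤ 5 / 4 * psf K P := by
  have h1 := one_sub_psf_mul_le hKP hP
  have h2 : 0 ≤ (K : ℝ) ^ 2 / P := by positivity
  nlinarith

lemma psf_pos (hKP : K ≤ P) (hK : 0 < K) : 0 < psf K P := by
  have hP : 0 < P := hK.trans_le hKP
  have h1 := one_sub_psf_mul_le hKP hP
  have h2 : 0 < (K : ℝ) ^ 2 / P := by positivity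
  by_contra! h
  nlinarith

end KeyRings

section PairWeight

open Finset

variable {V : Type*} [Fintype V] [DecidableEq V]

/-- The probability that independent trials indexed by `V` select exactly `A` for the first node
and `B` for the second, when each trial selects both with probability `b` and each single one
with total probability `q`. -/
def pairWeight (b q : ℝ) (A B : Finset V) : ℝ :=
  ∏ i, if i ∈ A then (if i ∈ B then b else q - b) else if i ∈ B then q - b else 1 - 2 * q + b

lemma pairWeight_eq (b q : ℝ) (A B : Finset V) :
    pairWeight b q A B =
      b ^ #(A ∩ B) * (q - b) ^ (#(A \ B) + #(B \ A)) * (1 - 2 * q + b) ^ #(A ∪ B)ᶜ := by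
  have h : ∀ i : V, (if i ∈ A then (if i ∈ B then b else q - b)
      else if i ∈ B then q - b else 1 - 2 * q + b) =
      (if i ∈ A ∩ B then b else 1) * ((if i ∈ A \ B then q - b else 1) *
        (if i ∈ B \ A then q - b else 1)) * (if i ∈ (A ∪ B)ᶜ then 1 - 2 * q + b else 1) := by
    intro i
    by_cases hA : i ∈ A <;> by_cases hB : i ∈ B <;> simp [hA, hB]
  unfold pairWeight
  simp_rw [h, prod_mul_distrib, Fintype.prod_ite_mem, prod_const, pow_add]

lemma pairWeight_nonneg {b q : ℝ} (hb : 0 ≤ b) (hbq : b ≤ q) (hq : 2 * q ≤ 1) (A B : Finset V) :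
    0 ≤ pairWeight b q A B := by
  rw [pairWeight_eq]
  have h1 : 0 ≤ q - b := by linarith
  have h2 : 0 ≤ 1 - 2 * q + b := by linarith
  positivity

lemma pairWeight_le {b q : ℝ} (hb : 0 ≤ b) (hbq : b ≤ q) (hq0 : 0 < q) (hq : 2 * q ≤ 1)
    {A B : Finset V} {l : ℕ} (hA : #A = l) (hB : #B = l) :
    pairWeight b q A B ≤
      q ^ (2 * l) * (1 - 2 * q + b) ^ (Fintype.card V - 2 * l) * (b / q ^ 2) ^ #(A ∩ B) := by
  have h1 : 0 ≤ q - b := by linarith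
  have h2 : 0 ≤ 1 - 2 * q + b := by linarith
  have hAB := card_sdiff_add_card_inter A B
  have hBA := card_sdiff_add_card_inter B A
  rw [inter_comm B A] at hBA
  have hc : Fintype.card V - 2 * l ≤ #(A ∪ B)ᶜ := by
    rw [card_compl]
    have := card_union_le A B
    omega
  have hexp : 2 * l = #(A \ B) + #(B \ A) + 2 * #(A ∩ B) := by omega
  rw [pairWeight_eq]
  calc b ^ #(A ∩ B) * (q - b) ^ (#(A \ B) + #(B \ A)) * (1 - 2 * q + b) ^ #(A ∪ B)ᶜ
      ≤ b ^ #(A ∩ B) * q ^ (#(A \ B) + #(B \ A)) *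
          (1 - 2 * q + b) ^ (Fintype.card V - 2 * l) := by
        refine mul_le_mul ?_ (pow_le_pow_of_le_one h2 (by linarith) hc) (by positivity)
          (by positivity)
        gcongr
        linarith
    _ = _ := by
        nth_rewrite 2 [hexp]
        rw [pow_add q (_ + _) (2 * _), pow_mul q, div_pow]
        field_simp

lemma Nat.choose_sub_le_pow_mul_div (N l d : ℕ) (hd : d ≤ l) :
    ((N - d).choose (l - d) : ℝ) ≤ (l : ℝ) ^ d * (N : ℝ) ^ (l - d) / l.factorial := by
  rw [le_div_iff₀ (by positivity)]
  have h1 : ((N - d).choose (l - d)) * (l - d).factorial ≤ N ^ (l - d) := by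
    rw [mul_comm, ← Nat.descFactorial_eq_factorial_mul_choose]
    exact (Nat.descFactorial_le_pow _ _).trans (Nat.pow_le_pow_left (Nat.sub_le _ _) _)
  have h2 : l.factorial ≤ (l - d).factorial * l ^ d := by
    rw [← Nat.factorial_mul_descFactorial hd]
    exact Nat.mul_le_mul_left _ (Nat.descFactorial_le_pow _ _)
  have : (N - d).choose (l - d) * l.factorial ≤ l ^ d * N ^ (l - d) :=
    calc _ ≤ (N - d).choose (l - d) * ((l - d).factorial * l ^ d) := Nat.mul_le_mul_left _ h2
      _ = ((N - d).choose (l - d) * (l - d).factorial) * l ^ d := by ring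
      _ ≤ N ^ (l - d) * l ^ d := Nat.mul_le_mul_right _ h1
      _ = _ := by ring
  exact_mod_cast this

lemma sum_pow_card_inter_le {r : ℝ} (hr : 0 ≤ r) {l : ℕ} {A : Finset V} (hA : #A = l) :
    ∑ B : Finset V with #B = l, r ^ #(A ∩ B) ≤
      (r * l + Fintype.card V) ^ l / l.factorial := by
  calc ∑ B : Finset V with #B = l, r ^ #(A ∩ B)
      ≤ ∑ B : Finset V with #B = l, ∑ D ∈ A.powerset, if D ⊆ B then r ^ #D else 0 := by
        refine sum_le_sum fun B _ => ?_
        have hmem : A ∩ B ∈ A.powerset := mem_powerset.2 inter_subset_left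
        have := single_le_sum (f := fun D => if D ⊆ B then r ^ #D else 0)
          (fun D _ => by positivity) hmem
        simpa [inter_subset_right] using this
    _ = ∑ D ∈ A.powerset, r ^ #D * (Fintype.card V - #D).choose (l - #D) := by
        rw [sum_comm]
        refine sum_congr rfl fun D hD => ?_
        have hDl : #D ≤ l := hA ▸ card_le_card (mem_powerset.1 hD)
        rw [← sum_filter, sum_const, nsmul_eq_mul, univ_filter_card_eq,
          card_filter_powersetCard_subset _ _ _ (subset_univ _) hDl, card_univ, mul_comm]
    _ ≤ ∑ D ∈ A.powerset,
          (r * l) ^ #D * (Fintype.card V : ℝ) ^ (#A - #D) / l.factorial := by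
        refine sum_le_sum fun D hD => ?_
        have hDl : #D ≤ l := hA ▸ card_le_card (mem_powerset.1 hD)
        have := mul_le_mul_of_nonneg_left
          (Nat.choose_sub_le_pow_mul_div (Fintype.card V) l #D hDl) (pow_nonneg hr #D)
        refine this.trans (le_of_eq ?_)
        rw [hA, mul_pow]; ring
    _ = _ := by rw [← sum_div, sum_pow_mul_eq_add_pow, hA]

/-- The probability that exactly `l` trials select the first node and exactly `l` the second. -/
def pairProb (V : Type*) [Fintype V] [DecidableEq V] (b q : ℝ) (l : ℕ) : ℝ :=
  ∑ A : Finset V with #A = l, ∑ B : Finset V with #B = l, pairWeight b q A B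

lemma pairProb_nonneg {b q : ℝ} (hb : 0 ≤ b) (hbq : b ≤ q) (hq : 2 * q ≤ 1) (l : ℕ) :
    0 ≤ pairProb V b q l :=
  sum_nonneg fun _ _ => sum_nonneg fun _ _ => pairWeight_nonneg hb hbq hq _ _

lemma pairProb_le {b q : ℝ} (hb : 0 ≤ b) (hbq : b ≤ q) (hq0 : 0 < q) (hq : 2 * q ≤ 1) (l : ℕ) :
    pairProb V b q l ≤ (Fintype.card V : ℝ) ^ l * (b / q ^ 2 * l + Fintype.card V) ^ l *
      q ^ (2 * l) * (1 - 2 * q + b) ^ (Fintype.card V - 2 * l) / (l.factorial : ℝ) ^ 2 := by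
  set c := q ^ (2 * l) * (1 - 2 * q + b) ^ (Fintype.card V - 2 * l) with hc
  have hc0 : 0 ≤ c := by
    have h2 : 0 ≤ 1 - 2 * q + b := by linarith
    positivity
  have hr : 0 ≤ b / q ^ 2 := by positivity
  calc pairProb V b q l
      ≤ ∑ A : Finset V with #A = l, ∑ B : Finset V with #B = l,
          c * (b / q ^ 2) ^ #(A ∩ B) := by
        refine sum_le_sum fun A hA => sum_le_sum fun B hB => ?_
        exact pairWeight_le hb hbq hq0 hq (mem_filter.1 hA).2 (mem_filter.1 hB).2
    _ ≤ ∑ A : Finset V with #A = l,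
          c * ((b / q ^ 2 * l + Fintype.card V) ^ l / l.factorial) := by
        refine sum_le_sum fun A hA => ?_
        rw [← mul_sum]
        exact mul_le_mul_of_nonneg_left (sum_pow_card_inter_le hr (mem_filter.1 hA).2) hc0
    _ = (Fintype.card V).choose l *
          (c * ((b / q ^ 2 * l + Fintype.card V) ^ l / l.factorial)) := by
        rw [sum_const, nsmul_eq_mul, univ_filter_card_eq, card_powersetCard, card_univ]
    _ ≤ ((Fintype.card V : ℝ) ^ l / l.factorial) *
          (c * ((b / q ^ 2 * l + Fintype.card V) ^ l / l.factorial)) := by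
        gcongr
        exact Nat.choose_le_pow_div l _
    _ = _ := by rw [hc]; ring

lemma le_pairProb {b q : ℝ} (hb : 0 ≤ b) (hbq : b ≤ q) (hq : 2 * q ≤ 1) {l : ℕ}
    (hl : 2 * l ≤ Fintype.card V) :
    ((Fintype.card V : ℝ) - 2 * l) ^ (2 * l) * (q - b) ^ (2 * l) *
      (1 - 2 * q) ^ Fintype.card V / (l.factorial : ℝ) ^ 2 ≤ pairProb V b q l := by
  set N := Fintype.card V with hN
  have h1 : 0 ≤ q - b := by linarith
  have h2 : 0 ≤ 1 - 2 * q := by linarith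
  set c := (q - b) ^ (2 * l) * (1 - 2 * q) ^ N with hc
  have hc0 : 0 ≤ c := by positivity
  have hch : ∀ m : ℕ, N - l ≤ m → ((N : ℝ) - 2 * l) ^ l / l.factorial ≤ m.choose l := by
    intro m hm
    rw [div_le_iff₀ (by positivity)]
    have : (N - 2 * l) ^ l ≤ m.choose l * l.factorial := by
      rw [mul_comm (m.choose l), ← Nat.descFactorial_eq_factorial_mul_choose]
      refine le_trans ?_ (Nat.pow_sub_le_descFactorial _ _)
      exact Nat.pow_le_pow_left (by omega) _
    have h' : ((N - 2 * l : ℕ) : ℝ) = (N : ℝ) - 2 * l := by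
      rw [Nat.cast_sub hl]; push_cast; ring
    rw [← h']
    exact_mod_cast this
  have hn0 : 0 ≤ (N : ℝ) - 2 * l := by
    have : (2 * l : ℝ) ≤ N := by exact_mod_cast hl
    linarith
  calc ((N : ℝ) - 2 * l) ^ (2 * l) * (q - b) ^ (2 * l) * (1 - 2 * q) ^ N / (l.factorial : ℝ) ^ 2
      = (((N : ℝ) - 2 * l) ^ l / l.factorial) * ((((N : ℝ) - 2 * l) ^ l / l.factorial) * c) := by
        rw [hc]; ring
    _ ≤ (N.choose l : ℝ) * (((N - l).choose l : ℝ) * c) := by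
        gcongr
        · exact hch N (Nat.sub_le _ _)
        · exact hch (N - l) le_rfl
    _ = ∑ A ∈ powersetCard l (univ : Finset V), ∑ B ∈ powersetCard l Aᶜ, c := by
        have : ∀ A ∈ powersetCard l (univ : Finset V), ∑ B ∈ powersetCard l Aᶜ, c =
            (N - l).choose l * c := by
          intro A hA
          rw [sum_const, nsmul_eq_mul, card_powersetCard, card_compl, (mem_powersetCard.1 hA).2]
        rw [sum_congr rfl this, sum_const, nsmul_eq_mul, card_powersetCard, card_univ]
    _ ≤ ∑ A ∈ powersetCard l (univ : Finset V), ∑ B ∈ powersetCard l Aᶜ, pairWeight b q A B := by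
        refine sum_le_sum fun A hA => sum_le_sum fun B hB => ?_
        rw [mem_powersetCard] at hA hB
        have hd : Disjoint A B := by
          rw [disjoint_comm]; exact subset_compl_iff_disjoint_right.1 hB.1
        rw [pairWeight_eq, disjoint_iff_inter_eq_empty.1 hd, sdiff_eq_self_of_disjoint hd,
          sdiff_eq_self_of_disjoint hd.symm, hA.2, hB.2, card_empty, pow_zero, one_mul, ← two_mul,
          hc]
        gcongr
        calc (1 - 2 * q) ^ N ≤ (1 - 2 * q) ^ #(A ∪ B)ᶜ :=
              pow_le_pow_of_le_one h2 (by linarith) (card_le_univ _)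
          _ ≤ _ := by gcongr; linarith
    _ ≤ ∑ A ∈ powersetCard l (univ : Finset V), ∑ B ∈ powersetCard l univ,
          pairWeight b q A B := by
        refine sum_le_sum fun A _ => sum_le_sum_of_subset_of_nonneg
          (powersetCard_mono (subset_univ _)) fun B _ _ => pairWeight_nonneg hb hbq hq A B
    _ = pairProb V b q l := by
        rw [pairProb, univ_filter_card_eq]

end PairWeight

section FiniteProducts

open Finset

@[to_additive]
lemma prod_eq_mul_mul_prod_others {I M : Type*} [Fintype I] [DecidableEq I] [CommMonoid M]
    {a b : I} (hab : a ≠ b) (f : I → M) :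
    ∏ i, f i = f a * f b * ∏ i : {i // i ≠ a ∧ i ≠ b}, f i := by
  have h : ∏ i ∈ (univ.erase a).erase b, f i = ∏ i : {i // i ≠ a ∧ i ≠ b}, f i :=
    prod_subtype _ (by simp [and_comm]) f
  rw [← h, mul_assoc, mul_prod_erase _ _ (by simp [hab.symm]), mul_prod_erase _ _ (mem_univ a)]

lemma sum_prod_mul_prod_comp {E J C : Type*} [Fintype E] [DecidableEq E] [Fintype J]
    [Fintype C] (w : C → ℝ) (hw : ∑ c, w c = 1) (ι : J → E)
    (hι : Function.Injective ι) (f : J → C → ℝ) :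
    ∑ ω : E → C, (∏ e, w (ω e)) * ∏ j, f j (ω (ι j)) = ∏ j, ∑ c, w c * f j c := by
  classical
  have h1 : ∀ ω : E → C, (∏ e, w (ω e)) * ∏ j, f j (ω (ι j)) =
      ∏ e, (w (ω e) * ∏ j with ι j = e, f j (ω e)) := by
    intro ω
    rw [prod_mul_distrib, ← prod_fiberwise univ ι]
    congr 1
    refine prod_congr rfl fun e _ => prod_congr rfl fun j hj => ?_
    rw [(mem_filter.1 hj).2]
  have h2 := prod_univ_sum (fun _ : E => (univ : Finset C))
    (fun e c => w c * ∏ j with ι j = e, f j c)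
  rw [Fintype.piFinset_univ] at h2
  simp_rw [h1]
  rw [← h2, ← prod_subset (subset_univ (univ.image ι)), prod_image (fun _ _ _ _ h => hι h)]
  · refine prod_congr rfl fun j _ => sum_congr rfl fun c _ => ?_
    have : ({i | ι i = ι j} : Finset J) = {j} := by
      ext i; simp [hι.eq_iff]
    rw [this, prod_singleton]
  · intro e _ he
    have : ({j | ι j = e} : Finset J) = ∅ := by
      ext j
      simp only [mem_filter, mem_univ, true_and, notMem_empty, iff_false]
      rintro rfl
      exact he (mem_image_of_mem _ (mem_univ j))
    simp [this, hw]

lemma sum_prod_condition_pair {I R : Type*} [Fintype I] [DecidableEq I] [Fintype R]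
    {a b : I} (hab : a ≠ b) (w : R → ℝ) (G : R → R → ℝ)
    (g : {i // i ≠ a ∧ i ≠ b} → R → R → R → ℝ) :
    ∑ S : I → R, (∏ i, w (S i)) * (G (S a) (S b) * ∏ i, g i (S a) (S b) (S i)) =
      ∑ s, ∑ t, w s * w t * (G s t * ∏ i, ∑ r, w r * g i s t r) := by
  classical
  have h1 : ∀ S : I → R, (∏ i, w (S i)) * (G (S a) (S b) * ∏ i, g i (S a) (S b) (S i)) =
      ∑ s, ∑ t, if S a = s then if S b = t then
        (∏ i, w (S i)) * (G s t * ∏ i, g i s t (S i)) else 0 else 0 := by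
    intro S
    simp
  simp_rw [h1]
  rw [sum_comm]
  refine sum_congr rfl fun s _ => ?_
  rw [sum_comm]
  refine sum_congr rfl fun t _ => ?_
  let h : I → R → ℝ := fun i r => w r *
    if hi : i ≠ a ∧ i ≠ b then g ⟨i, hi⟩ s t r
    else if i = a then (if r = s then 1 else 0) else (if r = t then 1 else 0)
  have h2 : ∀ S : I → R, (if S a = s then if S b = t then
        (∏ i, w (S i)) * (G s t * ∏ i, g i s t (S i)) else 0 else 0) =
      G s t * ∏ i, h i (S i) := by
    intro S
    rw [prod_mul_distrib]
    have := prod_eq_mul_mul_prod_others hab (fun i =>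
      if hi : i ≠ a ∧ i ≠ b then g ⟨i, hi⟩ s t (S i)
      else if i = a then (if S i = s then (1 : ℝ) else 0) else (if S i = t then 1 else 0))
    rw [this]
    have h3 : ∀ i : {i // i ≠ a ∧ i ≠ b}, (if hi : i.1 ≠ a ∧ i.1 ≠ b then g ⟨i, hi⟩ s t (S i)
      else if i.1 = a then (if S i = s then (1 : ℝ) else 0) else (if S i = t then 1 else 0)) =
      g i s t (S i) := fun i => by rw [dif_pos i.2]
    simp_rw [h3]
    by_cases ha : S a = s <;> by_cases hb : S b = t <;> simp [ha, hb, hab.symm]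
    ring
  simp_rw [h2]
  have h4 := prod_univ_sum (fun _ : I => (univ : Finset R)) h
  rw [Fintype.piFinset_univ] at h4
  rw [← mul_sum, ← h4, prod_eq_mul_mul_prod_others hab]
  have h5 : ∀ i : {i // i ≠ a ∧ i ≠ b}, ∑ r, h i r = ∑ r, w r * g i s t r := fun i => by
    simp only [h, dif_pos i.2]
  have h6 : ∑ r, h a r = w s := by simp [h]
  have h7 : ∑ r, h b r = w t := by simp [h, hab.symm]
  simp_rw [h5]
  rw [h6, h7]
  ring

end FiniteProducts

section Model

open Finset

/-- Mass function of the Bernoulli distribution. -/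
def bernMass (p : ℝ) (c : Bool) : ℝ := if c then p else 1 - p

lemma sum_bernMass (p : ℝ) : ∑ c, bernMass p c = 1 := by
  simp [bernMass]

lemma bern_real_singleton {p : ℝ} (hp0 : 0 ≤ p) (hp1 : p ≤ 1) (c : Bool) :
    ((bern p) {c}).toReal = bernMass p c := by
  have : 0 ≤ 1 - p := by linarith
  cases c <;> simp [bern, bernMass, hp0, this]

instance (p : ℝ) : IsFiniteMeasure (bern p) := by
  constructor
  simp only [bern, Measure.coe_add, Measure.coe_smul, Pi.add_apply, Pi.smul_apply, smul_eq_mul,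
    measure_univ, mul_one]
  exact ENNReal.add_lt_top.2 ⟨ENNReal.ofReal_lt_top, ENNReal.ofReal_lt_top⟩

instance (P K : ℕ) : MeasurableSingletonClass (KeyRing P K) := ⟨fun _ => trivial⟩

lemma uniformKeyMeasure_singleton (P K : ℕ) (r : KeyRing P K) :
    uniformKeyMeasure P K {r} = (Fintype.card (KeyRing P K) : ℝ≥0∞)⁻¹ := by
  simp [uniformKeyMeasure]

instance (P K : ℕ) : IsFiniteMeasure (uniformKeyMeasure P K) := by
  constructor
  rw [uniformKeyMeasure, Measure.smul_apply, smul_eq_mul, Measure.count_univ,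
    ENat.card_eq_coe_fintype_card]
  exact lt_of_le_of_lt (ENNReal.inv_mul_le_one _) ENNReal.one_lt_top

lemma gonMeasure_real_singleton {n K P : ℕ} {p : ℝ} (hp0 : 0 ≤ p) (hp1 : p ≤ 1)
    (ω : GonSpace n K P) :
    (gonMeasure n K P p).real {ω} =
      (∏ _i : Fin n, (Fintype.card (KeyRing P K) : ℝ)⁻¹) * ∏ e, bernMass p (ω.2 e) := by
  obtain ⟨S, C⟩ := ω
  rw [measureReal_def, gonMeasure, ← Set.singleton_prod_singleton, Measure.prod_prod,
    Measure.pi_singleton, Measure.pi_singleton, ENNReal.toReal_mul, ENNReal.toReal_prod,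
    ENNReal.toReal_prod]
  simp_rw [bern_real_singleton hp0 hp1, uniformKeyMeasure_singleton, ENNReal.toReal_inv,
    ENNReal.toReal_natCast]

open Classical in
lemma gonMeasure_real_eq_sum {n K P : ℕ} {p : ℝ} (hp0 : 0 ≤ p) (hp1 : p ≤ 1)
    (s : Set (GonSpace n K P)) :
    (gonMeasure n K P p s).toReal =
      ∑ S : Fin n → KeyRing P K, (∏ _i : Fin n, (Fintype.card (KeyRing P K) : ℝ)⁻¹) *
        ∑ C : Sym2 (Fin n) → Bool, (∏ e, bernMass p (C e)) * if (S, C) ∈ s then 1 else 0 := by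
  have : SigmaFinite (gonMeasure n K P p) := by unfold gonMeasure; infer_instance
  have h := sum_measureReal_singleton (μ := gonMeasure n K P p) s.toFinset
  rw [Set.coe_toFinset] at h
  rw [← measureReal_def, ← h]
  simp_rw [gonMeasure_real_singleton hp0 hp1, mul_sum]
  rw [← Fintype.sum_prod_type', ← Set.filter_mem_univ_eq_toFinset, sum_filter]
  refine sum_congr rfl fun ω _ => ?_
  split_ifs <;> simp_all

open Classical in
lemma gDeg_eq_card_others {V : Type*} [Fintype V] (G : SimpleGraph V) {a b : V} (hab : a ≠ b) :
    gDeg G a = #{i : {i // i ≠ a ∧ i ≠ b} | G.Adj a i} + (decide (G.Adj a b)).toNat := by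
  rw [gDeg, Nat.card_eq_fintype_card, Fintype.card_subtype, card_filter,
    sum_eq_add_add_sum_others hab, card_filter]
  by_cases h : G.Adj a b <;> simp [h]
  ring

/-- Probability that an edge has status `c` given whether the key rings meet. -/
def edgeStatusProb (p : ℝ) (h c : Prop) [Decidable h] [Decidable c] : ℝ :=
  if h then (if c then p else 1 - p) else (if c then 0 else 1)

lemma sum_bernMass_mul_status (p : ℝ) (h c : Prop) [Decidable h] [Decidable c] :
    ∑ d, bernMass p d * (if (h ∧ d = true ↔ c) then 1 else 0) = edgeStatusProb p h c := by
  by_cases hh : h <;> by_cases hc : c <;> simp [bernMass, edgeStatusProb, hh, hc]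

lemma others_edges_injective {n : ℕ} {a b : Fin n} (hab : a ≠ b) :
    Function.Injective (fun j : Option ({i // i ≠ a ∧ i ≠ b} ⊕ {i // i ≠ a ∧ i ≠ b}) =>
      match j with
      | none => s(a, b)
      | some (.inl i) => s(a, i.1)
      | some (.inr i) => s(b, i.1)) := by
  rintro (_ | ⟨i, hi⟩ | ⟨i, hi⟩) (_ | ⟨j, hj⟩ | ⟨j, hj⟩) h <;>
    simp only [Sym2.eq_iff, Option.some.injEq, Sum.inl.injEq, Sum.inr.injEq,
      Subtype.mk.injEq] at h ⊢ <;> grind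

lemma sum_channels {n : ℕ} {p : ℝ} {a b : Fin n} (hab : a ≠ b) (h0 : Prop) [Decidable h0]
    (e : Bool) (ha hb : {i // i ≠ a ∧ i ≠ b} → Prop) [DecidablePred ha] [DecidablePred hb]
    (A B : Finset {i // i ≠ a ∧ i ≠ b}) :
    ∑ C : Sym2 (Fin n) → Bool, (∏ e, bernMass p (C e)) *
      ((if (h0 ∧ C s(a, b) = true ↔ e = true) then 1 else 0) *
        ∏ i, ((if (ha i ∧ C s(a, i.1) = true ↔ i ∈ A) then 1 else 0) *
          (if (hb i ∧ C s(b, i.1) = true ↔ i ∈ B) then 1 else 0))) =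
      edgeStatusProb p h0 (e = true) *
        ∏ i, (edgeStatusProb p (ha i) (i ∈ A) * edgeStatusProb p (hb i) (i ∈ B)) := by
  have := sum_prod_mul_prod_comp (bernMass p) (sum_bernMass p) _ (others_edges_injective hab)
    (fun j d => match j with
      | none => if (h0 ∧ d = true ↔ e = true) then 1 else 0
      | some (.inl i) => if (ha i ∧ d = true ↔ i ∈ A) then 1 else 0
      | some (.inr i) => if (hb i ∧ d = true ↔ i ∈ B) then 1 else 0)
  simpa only [Fintype.prod_option, Fintype.prod_sum_type, sum_bernMass_mul_status,
    ← prod_mul_distrib] using this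

lemma avg_status {P K : ℕ} (hKP : K ≤ P) (p : ℝ) (s t : KeyRing P K) (c d : Prop)
    [Decidable c] [Decidable d] :
    ∑ r : KeyRing P K, (Fintype.card (KeyRing P K) : ℝ)⁻¹ *
      (edgeStatusProb p (hits s r) c * edgeStatusProb p (hits t r) d) =
      if c then (if d then p ^ 2 * bothProb s t else pef K P p - p ^ 2 * bothProb s t)
      else if d then pef K P p - p ^ 2 * bothProb s t
      else 1 - 2 * pef K P p + p ^ 2 * bothProb s t := by
  have hM := card_keyRing_pos hKP
  have h1 : ∑ r : KeyRing P K, (if hits s r then (1 : ℝ) else 0) =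
      psf K P * Fintype.card (KeyRing P K) := by rw [sum_boole, card_hits hKP]
  have h2 : ∑ r : KeyRing P K, (if hits t r then (1 : ℝ) else 0) =
      psf K P * Fintype.card (KeyRing P K) := by rw [sum_boole, card_hits hKP]
  have h3 : ∑ r : KeyRing P K, (if hits s r ∧ hits t r then (1 : ℝ) else 0) =
      bothProb s t * Fintype.card (KeyRing P K) := by
    rw [sum_boole, bothProb, div_mul_cancel₀ _ hM.ne']
  have h4 : ∑ _r : KeyRing P K, (1 : ℝ) = Fintype.card (KeyRing P K) := by simp
  rw [← mul_sum, inv_mul_eq_iff_eq_mul₀ hM.ne']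
  have key : ∀ x0 x1 x2 x3 : ℝ, (∀ r : KeyRing P K,
      edgeStatusProb p (hits s r) c * edgeStatusProb p (hits t r) d =
        x0 * 1 + x1 * (if hits s r then (1 : ℝ) else 0) + x2 * (if hits t r then (1 : ℝ) else 0) +
        x3 * (if hits s r ∧ hits t r then (1 : ℝ) else 0)) →
      ∑ r : KeyRing P K, edgeStatusProb p (hits s r) c * edgeStatusProb p (hits t r) d =
        Fintype.card (KeyRing P K) *
          (x0 + x1 * psf K P + x2 * psf K P + x3 * bothProb s t) := by
    intro x0 x1 x2 x3 h
    rw [sum_congr rfl fun r _ => h r]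
    simp_rw [sum_add_distrib, ← mul_sum]
    rw [h1, h2, h3, h4]
    ring
  by_cases hc : c <;> by_cases hd : d
  · rw [key 0 0 0 (p ^ 2)]
    · simp [hc, hd]
    · intro r
      by_cases hs : hits s r <;> by_cases ht : hits t r <;>
        simp [edgeStatusProb, hc, hd, hs, ht] <;> ring
  · rw [key 0 p 0 (-p ^ 2)]
    · simp only [hc, hd, pef, if_true, if_false]; ring
    · intro r
      by_cases hs : hits s r <;> by_cases ht : hits t r <;>
        simp [edgeStatusProb, hc, hd, hs, ht] <;> ring
  · rw [key 0 0 p (-p ^ 2)]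
    · simp only [hc, hd, pef, if_true, if_false]; ring
    · intro r
      by_cases hs : hits s r <;> by_cases ht : hits t r <;>
        simp [edgeStatusProb, hc, hd, hs, ht] <;> ring
  · rw [key 1 (-p) (-p) (p ^ 2)]
    · simp only [hc, hd, pef, if_false]; ring
    · intro r
      by_cases hs : hits s r <;> by_cases ht : hits t r <;>
        simp [edgeStatusProb, hc, hd, hs, ht] <;> ring

lemma sum_indicator_triple {V : Type*} [Fintype V] [DecidableEq V] (e₀ : Bool)
    (A₀ B₀ : Finset V) (l : ℕ) :
    ∑ e : Bool, ∑ A : Finset V with #A + e.toNat = l, ∑ B : Finset V with #B + e.toNat = l,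
      (if e₀ = e then if A₀ = A then if B₀ = B then (1 : ℝ) else 0 else 0 else 0) =
      if #A₀ + e₀.toNat = l ∧ #B₀ + e₀.toNat = l then 1 else 0 := by
  simp only [sum_filter]
  rw [sum_eq_single e₀ (by intro e _ he; simp [he.symm]) (by simp),
    sum_eq_single A₀ (by intro A _ hA; simp [hA.symm]) (by simp),
    sum_eq_single B₀ (by intro B _ hB; simp [hB.symm]) (by simp)]
  by_cases h1 : #A₀ + e₀.toNat = l <;> by_cases h2 : #B₀ + e₀.toNat = l <;> simp [h1, h2]

open Classical in
lemma indicator_degEvent_inter {n K P : ℕ} {a b : Fin n} (hab : a ≠ b) (l : ℕ)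
    (S : Fin n → KeyRing P K) (C : Sym2 (Fin n) → Bool)
    [Decidable ((S, C) ∈ degEvent n K P a l ∩ degEvent n K P b l)] :
    (if (S, C) ∈ degEvent n K P a l ∩ degEvent n K P b l then (1 : ℝ) else 0) =
      ∑ e : Bool, ∑ A : Finset {i : Fin n // i ≠ a ∧ i ≠ b} with #A + e.toNat = l,
        ∑ B : Finset {i : Fin n // i ≠ a ∧ i ≠ b} with #B + e.toNat = l,
        ((if (hits (S a) (S b) ∧ C s(a, b) = true ↔ e = true) then 1 else 0) *
        ∏ i : {i : Fin n // i ≠ a ∧ i ≠ b},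
          ((if (hits (S a) (S i) ∧ C s(a, i.1) = true ↔ i ∈ A) then 1 else 0) *
          (if (hits (S b) (S i) ∧ C s(b, i.1) = true ↔ i ∈ B) then 1 else 0))) := by
  set G := gonGraph (S, C) with hG
  set e₀ : Bool := decide (hits (S a) (S b) ∧ C s(a, b) = true) with he₀
  set A₀ : Finset {i : Fin n // i ≠ a ∧ i ≠ b} :=
    {i | hits (S a) (S i) ∧ C s(a, i.1) = true} with hA₀
  set B₀ : Finset {i : Fin n // i ≠ a ∧ i ≠ b} :=
    {i | hits (S b) (S i) ∧ C s(b, i.1) = true} with hB₀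
  have hda : gDeg G a = #A₀ + e₀.toNat := by
    rw [gDeg_eq_card_others G hab]
    congr 2
    · ext i
      simp only [hA₀, mem_filter, mem_univ, true_and, hG, gonGraph]
      exact and_iff_right i.2.1.symm
    · rw [he₀, decide_eq_decide]
      exact and_iff_right hab
  have hdb : gDeg G b = #B₀ + e₀.toNat := by
    rw [gDeg, Nat.card_eq_fintype_card, Fintype.card_subtype, card_filter,
      sum_eq_add_add_sum_others hab, hB₀, card_filter]
    have h1 : ∀ i : {i : Fin n // i ≠ a ∧ i ≠ b}, (if G.Adj b i then 1 else 0) =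
        if hits (S b) (S i) ∧ C s(b, i.1) = true then 1 else 0 := fun i =>
      if_congr (and_iff_right i.2.2.symm) rfl rfl
    have h2 : (if G.Adj b a then 1 else 0) = e₀.toNat := by
      rw [he₀, G.adj_comm]
      have : G.Adj a b ↔ (hits (S a) (S b) ∧ C s(a, b) = true) := and_iff_right hab
      simp only [this]
      by_cases h : hits (S a) (S b) ∧ C s(a, b) = true <;> simp [h]
    rw [sum_congr rfl fun i _ => h1 i, h2]
    simp [add_comm]
  have hmem : (S, C) ∈ degEvent n K P a l ∩ degEvent n K P b l ↔
      #A₀ + e₀.toNat = l ∧ #B₀ + e₀.toNat = l := by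
    rw [← hda, ← hdb]
    simp only [degEvent, Set.mem_inter_iff, Set.mem_ofPred_eq, Fin.is_lt, Fin.eta,
      exists_true_left, hG]
  have hterm : ∀ (e : Bool) (A B : Finset {i : Fin n // i ≠ a ∧ i ≠ b}),
      ((if (hits (S a) (S b) ∧ C s(a, b) = true ↔ e = true) then (1 : ℝ) else 0) *
      ∏ i : {i : Fin n // i ≠ a ∧ i ≠ b},
        ((if (hits (S a) (S i) ∧ C s(a, i.1) = true ↔ i ∈ A) then (1 : ℝ) else 0) *
        (if (hits (S b) (S i) ∧ C s(b, i.1) = true ↔ i ∈ B) then 1 else 0))) =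
      if e₀ = e then if A₀ = A then if B₀ = B then 1 else 0 else 0 else 0 := by
    intro e A B
    have h1 : (hits (S a) (S b) ∧ C s(a, b) = true ↔ e = true) ↔ e₀ = e := by
      rw [he₀]; cases e <;> simp
    have h2 : (∀ i, i ∈ (univ : Finset {i : Fin n // i ≠ a ∧ i ≠ b}) →
        (hits (S a) (S i) ∧ C s(a, i.1) = true ↔ i ∈ A)) ↔ A₀ = A := by
      rw [hA₀, Finset.ext_iff]; simp
    have h3 : (∀ i, i ∈ (univ : Finset {i : Fin n // i ≠ a ∧ i ≠ b}) →
        (hits (S b) (S i) ∧ C s(b, i.1) = true ↔ i ∈ B)) ↔ B₀ = B := by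
      rw [hB₀, Finset.ext_iff]; simp
    rw [prod_mul_distrib, prod_boole, prod_boole]
    simp only [h1, h2, h3]
    split_ifs <;> simp
  simp_rw [hterm, hmem]
  convert (sum_indicator_triple e₀ A₀ B₀ l).symm

/-- The joint degree probability, conditioned on the key rings of the two nodes. -/
lemma measure_degEvent_inter {n K P : ℕ} {p : ℝ} (hKP : K ≤ P) (hp0 : 0 ≤ p) (hp1 : p ≤ 1)
    {a b : Fin n} (hab : a ≠ b) (l : ℕ) :
    (gonMeasure n K P p (degEvent n K P a l ∩ degEvent n K P b l)).toReal =
      ∑ s : KeyRing P K, ∑ t : KeyRing P K,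
        (Fintype.card (KeyRing P K) : ℝ)⁻¹ * (Fintype.card (KeyRing P K) : ℝ)⁻¹ *
        ∑ e : Bool, edgeStatusProb p (hits s t) (e = true) *
          ∑ A : Finset {i : Fin n // i ≠ a ∧ i ≠ b} with #A + e.toNat = l,
          ∑ B : Finset {i : Fin n // i ≠ a ∧ i ≠ b} with #B + e.toNat = l,
            pairWeight (p ^ 2 * bothProb s t) (pef K P p) A B := by
  classical
  rw [gonMeasure_real_eq_sum hp0 hp1]
  obtain ⟨D, hD⟩ : ∃ D, D = degEvent n K P a l ∩ degEvent n K P b l := ⟨_, rfl⟩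
  rw [← hD]
  have hchan : ∀ S : Fin n → KeyRing P K,
      ∑ C : Sym2 (Fin n) → Bool, (∏ e, bernMass p (C e)) *
        (if (S, C) ∈ D then (1 : ℝ) else 0) =
      ∑ e : Bool, ∑ A : Finset {i : Fin n // i ≠ a ∧ i ≠ b} with #A + e.toNat = l,
        ∑ B : Finset {i : Fin n // i ≠ a ∧ i ≠ b} with #B + e.toNat = l,
        edgeStatusProb p (hits (S a) (S b)) (e = true) *
          ∏ i : {i : Fin n // i ≠ a ∧ i ≠ b}, (edgeStatusProb p (hits (S a) (S i)) (i ∈ A) *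
            edgeStatusProb p (hits (S b) (S i)) (i ∈ B)) := by
    intro S
    simp only [hD, indicator_degEvent_inter hab, mul_sum]
    rw [sum_comm]
    refine sum_congr rfl fun e _ => ?_
    rw [sum_comm]
    refine sum_congr rfl fun A _ => ?_
    rw [sum_comm]
    refine sum_congr rfl fun B _ => ?_
    exact sum_channels hab _ e _ _ A B
  have hswap : ∀ {β : Type} (u : Finset β) (F : KeyRing P K → KeyRing P K → β → ℝ),
      ∑ s, ∑ t, ∑ e ∈ u, F s t e = ∑ e ∈ u, ∑ s, ∑ t, F s t e := by
    intro β u F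
    rw [sum_congr rfl fun s _ => sum_comm, sum_comm]
  simp_rw [hchan, mul_sum]
  rw [sum_comm, hswap]
  refine sum_congr rfl fun e _ => ?_
  rw [sum_comm, hswap]
  refine sum_congr rfl fun A _ => ?_
  rw [sum_comm, hswap]
  refine sum_congr rfl fun B _ => ?_
  rw [sum_prod_condition_pair hab (fun _ => (Fintype.card (KeyRing P K) : ℝ)⁻¹)
    (fun s t => edgeStatusProb p (hits s t) (e = true))
    (fun i s t r => edgeStatusProb p (hits s r) (i ∈ A) * edgeStatusProb p (hits t r) (i ∈ B))]
  simp_rw [avg_status hKP]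
  rfl

end Model

section Bounds

open Finset

/-- The asymptotic value of the joint degree probability, in terms of the number of nodes `n`
and the edge probability `q`. -/
def jointTarget (n q : ℝ) (l : ℕ) : ℝ :=
  1 / (l.factorial : ℝ) ^ 2 * (q * n) ^ (2 * l) * Real.exp (-2 * (q * n))

lemma jointTarget_pos {n q : ℝ} (hn : 0 < n) (hq : 0 < q) (l : ℕ) : 0 < jointTarget n q l := by
  unfold jointTarget; positivity

lemma jointTarget_eq_succ {n q : ℝ} (hn : 0 < n) (hq : 0 < q) (l : ℕ) :
    jointTarget n q l = jointTarget n q (l + 1) * (((l + 1 : ℕ) : ℝ) / (n * q)) ^ 2 := by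
  unfold jointTarget
  rw [Nat.factorial_succ, mul_add, pow_add]
  push_cast
  field_simp

variable {V : Type*} [Fintype V] [DecidableEq V]

lemma pairProb_le_jointTarget {n : ℕ} (hV : Fintype.card V + 2 = n) {b q : ℝ} (hb : 0 ≤ b)
    (hbq : b ≤ q) (hq0 : 0 < q) (hq : 2 * q ≤ 1) (l : ℕ) :
    pairProb V b q l ≤ jointTarget n q l *
      (Real.exp ((4 * l + 4) * q + n * b) * (1 + l * b / (n * q ^ 2)) ^ l) := by
  have hn : (0 : ℝ) < n := by rw [← hV]; positivity
  have hVn : (Fintype.card V : ℝ) = n - 2 := by rw [← hV]; push_cast; ring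
  have hVle : (Fintype.card V : ℝ) ≤ n := by linarith
  have h1 : (1 - 2 * q + b) ^ (Fintype.card V - 2 * l) ≤
      Real.exp (-2 * (q * n)) * Real.exp ((4 * l + 4) * q + n * b) := by
    calc (1 - 2 * q + b) ^ (Fintype.card V - 2 * l)
        ≤ Real.exp (-(2 * q - b)) ^ (Fintype.card V - 2 * l) := by
          refine pow_le_pow_left₀ (by linarith) ?_ _
          have := Real.add_one_le_exp (-(2 * q - b))
          linarith
      _ = Real.exp (-((2 * q - b) * (Fintype.card V - 2 * l : ℕ))) := by
          rw [← Real.exp_nat_mul]; ring_nf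
      _ ≤ _ := by
          rw [← Real.exp_add]
          refine Real.exp_le_exp.2 ?_
          have h2 : (n : ℝ) - 2 - 2 * l ≤ (Fintype.card V - 2 * l : ℕ) := by
            rw [← hVn]
            have : Fintype.card V ≤ (Fintype.card V - 2 * l) + 2 * l := by omega
            have : (Fintype.card V : ℝ) ≤ (Fintype.card V - 2 * l : ℕ) + 2 * l := by
              exact_mod_cast this
            linarith
          have h3 := mul_le_mul_of_nonneg_left h2 (show 0 ≤ 2 * q - b by linarith)
          have h4 : 0 ≤ b * (2 + 2 * l) := by positivity
          nlinarith
  have h2 : b / q ^ 2 * l + Fintype.card V ≤ n * (1 + l * b / (n * q ^ 2)) := by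
    have : n * (1 + l * b / (n * q ^ 2)) = b / q ^ 2 * l + n := by
      field_simp
      ring
    linarith
  refine (pairProb_le hb hbq hq0 hq l).trans ?_
  have h0 : 0 ≤ 1 - 2 * q + b := by linarith
  calc (Fintype.card V : ℝ) ^ l * (b / q ^ 2 * l + Fintype.card V) ^ l *
      q ^ (2 * l) * (1 - 2 * q + b) ^ (Fintype.card V - 2 * l) / (l.factorial : ℝ) ^ 2
      ≤ (n : ℝ) ^ l * (n * (1 + l * b / (n * q ^ 2))) ^ l * q ^ (2 * l) *
        (Real.exp (-2 * (q * n)) * Real.exp ((4 * l + 4) * q + n * b)) /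
        (l.factorial : ℝ) ^ 2 := by gcongr
    _ = _ := by
        unfold jointTarget
        rw [mul_pow (n : ℝ), mul_pow q, two_mul, pow_add (n : ℝ)]
        ring

/-- The probability that two nodes have degree `l`, given that their key rings meet (or not)
and the probability `b` that a third node is adjacent to both. -/
def condProb (V : Type*) [Fintype V] [DecidableEq V] (p b q : ℝ) (h : Prop) [Decidable h]
    (l : ℕ) : ℝ :=
  ∑ e : Bool, edgeStatusProb p h (e = true) *
    ∑ A : Finset V with #A + e.toNat = l, ∑ B : Finset V with #B + e.toNat = l,
      pairWeight b q A B

lemma edgeStatusProb_nonneg {p : ℝ} (hp0 : 0 ≤ p) (hp1 : p ≤ 1) (h c : Prop) [Decidable h]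
    [Decidable c] : 0 ≤ edgeStatusProb p h c := by
  unfold edgeStatusProb
  split_ifs <;> linarith

lemma edgeStatusProb_le_one {p : ℝ} (hp0 : 0 ≤ p) (hp1 : p ≤ 1) (h c : Prop) [Decidable h]
    [Decidable c] : edgeStatusProb p h c ≤ 1 := by
  unfold edgeStatusProb
  split_ifs <;> linarith

lemma condProb_nonneg {p b q : ℝ} (hp0 : 0 ≤ p) (hp1 : p ≤ 1) (hb : 0 ≤ b) (hbq : b ≤ q)
    (hq : 2 * q ≤ 1) (h : Prop) [Decidable h] (l : ℕ) : 0 ≤ condProb V p b q h l :=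
  sum_nonneg fun _ _ => mul_nonneg (edgeStatusProb_nonneg hp0 hp1 _ _)
    (sum_nonneg fun _ _ => sum_nonneg fun _ _ => pairWeight_nonneg hb hbq hq _ _)

lemma condProb_of_not {p b q : ℝ} {h : Prop} [Decidable h] (hh : ¬ h) (l : ℕ) :
    condProb V p b q h l = pairProb V b q l := by
  simp [condProb, edgeStatusProb, hh, pairProb]

lemma condProb_zero_le {p b q : ℝ} (hp0 : 0 ≤ p) (hp1 : p ≤ 1) (hb : 0 ≤ b) (hbq : b ≤ q)
    (hq : 2 * q ≤ 1) (h : Prop) [Decidable h] : condProb V p b q h 0 ≤ pairProb V b q 0 := by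
  have h1 := mul_le_mul_of_nonneg_right (edgeStatusProb_le_one hp0 hp1 h (false = true))
    (pairProb_nonneg (V := V) hb hbq hq 0)
  simpa [condProb, pairProb] using h1

lemma condProb_succ_le {p b q : ℝ} (hp0 : 0 ≤ p) (hp1 : p ≤ 1) (hb : 0 ≤ b) (hbq : b ≤ q)
    (hq : 2 * q ≤ 1) (h : Prop) [Decidable h] (l : ℕ) :
    condProb V p b q h (l + 1) ≤ pairProb V b q (l + 1) + pairProb V b q l := by
  have h1 := mul_le_mul_of_nonneg_right (edgeStatusProb_le_one hp0 hp1 h (false = true))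
    (pairProb_nonneg (V := V) hb hbq hq (l + 1))
  have h2 := mul_le_mul_of_nonneg_right (edgeStatusProb_le_one hp0 hp1 h (true = true))
    (pairProb_nonneg (V := V) hb hbq hq l)
  rw [one_mul] at h1 h2
  refine le_trans (le_of_eq ?_) (add_le_add h1 h2)
  simp [condProb, pairProb, add_comm]

lemma condProb_le {n : ℕ} (hV : Fintype.card V + 2 = n) {p b q ε : ℝ} (hp0 : 0 ≤ p)
    (hp1 : p ≤ 1) (hb : 0 ≤ b) (hbq : b ≤ q) (hq0 : 0 < q) (hq : 2 * q ≤ 1) (h : Prop)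
    [Decidable h] {l : ℕ} (hε : 0 < ε) (hl : l = 0 ∨ ε ≤ n * q) :
    condProb V p b q h l ≤ jointTarget n q l *
      ((1 + l / ε) ^ l * (1 + (l / ε) ^ 2) * Real.exp ((4 * l + 4) * q + n * b)) := by
  have hn : (0 : ℝ) < n := by rw [← hV]; positivity
  have hT := jointTarget_pos hn hq0 l
  cases l with
  | zero =>
    refine (condProb_zero_le hp0 hp1 hb hbq hq h).trans
      ((pairProb_le_jointTarget hV hb hbq hq0 hq 0).trans (le_of_eq ?_))
    simp
  | succ l =>
    have hl : ε ≤ n * q := hl.resolve_left (Nat.succ_ne_zero l)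
    have hratio : ∀ m : ℕ, m * b / (n * q ^ 2) ≤ m / ε := fun m =>
      calc m * b / (n * q ^ 2) ≤ m * q / (n * q ^ 2) := by gcongr
        _ = m / (n * q) := by field_simp
        _ ≤ m / ε := by gcongr
    have h1 : pairProb V b q (l + 1) ≤ jointTarget n q (l + 1) *
        ((1 + ((l + 1 : ℕ) : ℝ) / ε) ^ (l + 1) *
          Real.exp ((4 * ((l + 1 : ℕ) : ℝ) + 4) * q + n * b)) := by
      refine (pairProb_le_jointTarget hV hb hbq hq0 hq (l + 1)).trans ?_
      rw [mul_comm (Real.exp _)]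
      have := hratio (l + 1)
      gcongr
    have h2 : pairProb V b q l ≤ jointTarget n q (l + 1) * ((((l + 1 : ℕ) : ℝ) / ε) ^ 2 *
        ((1 + ((l + 1 : ℕ) : ℝ) / ε) ^ (l + 1) *
          Real.exp ((4 * ((l + 1 : ℕ) : ℝ) + 4) * q + n * b))) := by
      refine (pairProb_le_jointTarget hV hb hbq hq0 hq l).trans ?_
      rw [jointTarget_eq_succ hn hq0 l, mul_assoc, mul_comm (Real.exp _)]
      have h3 : (1 + l * b / (n * q ^ 2)) ^ l ≤ (1 + ((l + 1 : ℕ) : ℝ) / ε) ^ (l + 1) :=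
        calc (1 + l * b / (n * q ^ 2)) ^ l ≤ (1 + ((l + 1 : ℕ) : ℝ) / ε) ^ l := by
              have h4 : (l : ℝ) / ε ≤ ((l + 1 : ℕ) : ℝ) / ε := by gcongr; simp
              have := (hratio l).trans h4
              gcongr
          _ ≤ _ := by
              refine pow_le_pow_right₀ ?_ (Nat.le_succ l)
              have : 0 ≤ ((l + 1 : ℕ) : ℝ) / ε := by positivity
              linarith
      gcongr
      simp
    refine (condProb_succ_le hp0 hp1 hb hbq hq h l).trans ((add_le_add h1 h2).trans
      (le_of_eq ?_))
    ring

lemma jointTarget_le_pairProb {n : ℕ} (hV : Fintype.card V + 2 = n) {b q : ℝ} (hb : 0 ≤ b)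
    (hbq : b ≤ 2 * q ^ 2) (hq0 : 0 < q) (hq : 2 * q ≤ 1) {l : ℕ} (hl : 2 * l + 2 ≤ n) :
    jointTarget n q l * ((1 - (2 + 2 * l) / n) ^ (2 * l) * (1 - 2 * q) ^ (2 * l) *
      (1 - 4 * (n * q ^ 2))) ≤ pairProb V b q l := by
  have hn : (0 : ℝ) < n := by rw [← hV]; positivity
  have hVn : (Fintype.card V : ℝ) = n - 2 := by rw [← hV]; push_cast; ring
  have hl' : (2 : ℝ) * l + 2 ≤ n := by exact_mod_cast hl
  have hq2 : 0 ≤ 1 - 2 * q := by linarith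
  refine le_trans ?_ (le_pairProb hb (by nlinarith) hq (by omega))
  have h1 : Real.exp (-2 * (q * n)) * (1 - 4 * (n * q ^ 2)) ≤
      (1 - 2 * q) ^ Fintype.card V := by
    have h2 : 1 - 4 * (n * q ^ 2) ≤ (1 - 4 * q ^ 2) ^ n := by
      have := one_add_mul_le_pow (a := -(4 * q ^ 2)) (by nlinarith) n
      rw [← sub_eq_add_neg] at this
      linarith
    have h3 : 1 - 4 * q ^ 2 ≤ (1 - 2 * q) * Real.exp (2 * q) := by
      have := mul_le_mul_of_nonneg_left (Real.add_one_le_exp (2 * q)) hq2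
      linarith
    calc Real.exp (-2 * (q * n)) * (1 - 4 * (n * q ^ 2))
        ≤ Real.exp (-2 * (q * n)) * ((1 - 2 * q) * Real.exp (2 * q)) ^ n := by
          gcongr
          exact h2.trans (pow_le_pow_left₀ (by nlinarith) h3 n)
      _ = (1 - 2 * q) ^ n := by
          rw [mul_pow, ← Real.exp_nat_mul, mul_left_comm, ← Real.exp_add]
          ring_nf
          simp
      _ ≤ _ := pow_le_pow_of_le_one hq2 (by linarith) (by omega)
  have h2 : (n : ℝ) * (1 - (2 + 2 * l) / n) = Fintype.card V - 2 * l := by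
    rw [hVn]; field_simp; ring
  have h3 : q * (1 - 2 * q) ≤ q - b := by nlinarith
  have h4 : 0 ≤ (Fintype.card V : ℝ) - 2 * l := by rw [hVn]; linarith
  calc jointTarget n q l * ((1 - (2 + 2 * l) / n) ^ (2 * l) * (1 - 2 * q) ^ (2 * l) *
      (1 - 4 * (n * q ^ 2)))
      = (n * (1 - (2 + 2 * l) / n)) ^ (2 * l) * (q * (1 - 2 * q)) ^ (2 * l) *
        (Real.exp (-2 * (q * n)) * (1 - 4 * (n * q ^ 2))) / (l.factorial : ℝ) ^ 2 := by
        unfold jointTarget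
        simp only [mul_pow]
        ring
    _ ≤ (n * (1 - (2 + 2 * l) / n)) ^ (2 * l) * (q * (1 - 2 * q)) ^ (2 * l) *
        (1 - 2 * q) ^ Fintype.card V / (l.factorial : ℝ) ^ 2 := by
        rw [h2]
        gcongr
    _ ≤ _ := by
        rw [h2]
        gcongr

end Bounds

section MeasureBounds

open Finset

variable {n K P : ℕ} {p : ℝ} {a b : Fin n}

lemma card_others_add_two (hab : a ≠ b) :
    Fintype.card {i : Fin n // i ≠ a ∧ i ≠ b} + 2 = n := by
  have h := sum_eq_add_add_sum_others hab (fun _ : Fin n => 1)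
  simp only [sum_const, smul_eq_mul, mul_one, card_univ, Fintype.card_fin] at h
  omega

lemma measure_eq_sum_condProb (hKP : K ≤ P) (hp0 : 0 ≤ p) (hp1 : p ≤ 1) (hab : a ≠ b) (l : ℕ) :
    (gonMeasure n K P p (degEvent n K P a l ∩ degEvent n K P b l)).toReal =
      ∑ s : KeyRing P K, (Fintype.card (KeyRing P K) : ℝ)⁻¹ *
        ∑ t : KeyRing P K, (Fintype.card (KeyRing P K) : ℝ)⁻¹ *
          condProb {i : Fin n // i ≠ a ∧ i ≠ b} p (p ^ 2 * bothProb s t) (pef K P p)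
            (hits s t) l := by
  rw [measure_degEvent_inter hKP hp0 hp1 hab l]
  refine sum_congr rfl fun s _ => ?_
  rw [mul_sum]
  exact sum_congr rfl fun t _ => mul_assoc _ _ _

lemma sum_inv_card_mul_le (hKP : K ≤ P) {f : KeyRing P K → ℝ} {c : ℝ} (h : ∀ s, f s ≤ c) :
    ∑ s : KeyRing P K, (Fintype.card (KeyRing P K) : ℝ)⁻¹ * f s ≤ c := by
  have hM := card_keyRing_pos hKP
  calc ∑ s : KeyRing P K, (Fintype.card (KeyRing P K) : ℝ)⁻¹ * f s
      ≤ ∑ _s : KeyRing P K, (Fintype.card (KeyRing P K) : ℝ)⁻¹ * c :=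
        sum_le_sum fun s _ => mul_le_mul_of_nonneg_left (h s) (by positivity)
    _ = c := by
        rw [sum_const, card_univ, nsmul_eq_mul]
        field_simp

lemma le_sum_inv_card_mul (hKP : K ≤ P) {f : KeyRing P K → ℝ} {c : ℝ} (h : ∀ s, c ≤ f s) :
    c ≤ ∑ s : KeyRing P K, (Fintype.card (KeyRing P K) : ℝ)⁻¹ * f s := by
  have := sum_inv_card_mul_le hKP (f := fun s => -f s) (c := -c) (fun s => neg_le_neg (h s))
  simp only [mul_neg, sum_neg_distrib] at this
  linarith

lemma pef_nonneg (hp0 : 0 ≤ p) : 0 ≤ pef K P p := mul_nonneg hp0 (psf_nonneg P K)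

lemma pef_le_psf (hp1 : p ≤ 1) : pef K P p ≤ psf K P :=
  mul_le_of_le_one_left (psf_nonneg P K) hp1

lemma sq_mul_bothProb_le_pef (hKP : K ≤ P) (hp0 : 0 ≤ p) (hp1 : p ≤ 1) (s t : KeyRing P K) :
    p ^ 2 * bothProb s t ≤ pef K P p := by
  have h1 : p ^ 2 ≤ p := by nlinarith
  exact mul_le_mul h1 (bothProb_le_psf hKP s t) (bothProb_nonneg s t) hp0

lemma sq_mul_sq_div_sq_le (hKP : K ≤ P) (hP : 0 < P) (h5 : psf K P ≤ 1 / 5) :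
    p ^ 2 * ((K : ℝ) ^ 2 / P) ^ 2 ≤ 2 * pef K P p ^ 2 := by
  have h1 := pow_le_pow_left₀ (by positivity) (sq_div_le_psf hKP hP h5) 2
  have h2 := mul_le_mul_of_nonneg_left h1 (sq_nonneg p)
  have h3 : 0 ≤ (p * psf K P) ^ 2 := sq_nonneg _
  unfold pef
  nlinarith

lemma sq_mul_bothProb_le_of_not_hits (hKP : K ≤ P) (hP : 0 < P) (h5 : psf K P ≤ 1 / 5)
    {s t : KeyRing P K} (h : ¬ hits s t) : p ^ 2 * bothProb s t ≤ 2 * pef K P p ^ 2 := by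
  have h1 := bothProb_le hKP hP s t
  rw [not_nonempty_iff_eq_empty.1 h, card_empty, Nat.cast_zero, zero_mul, zero_add] at h1
  exact (mul_le_mul_of_nonneg_left h1 (sq_nonneg p)).trans (sq_mul_sq_div_sq_le hKP hP h5)

lemma sq_mul_bothProb_le (hKP : K ≤ P) (hP : 0 < P) (h5 : psf K P ≤ 1 / 5)
    (s t : KeyRing P K) :
    p ^ 2 * bothProb s t ≤ 5 / 4 * (p * pef K P p) + 2 * pef K P p ^ 2 := by
  have hcard : (#(s.1 ∩ t.1) : ℝ) ≤ K := by
    exact_mod_cast (card_le_card inter_subset_left).trans_eq s.2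
  have h1 : bothProb s t ≤ 5 / 4 * psf K P + ((K : ℝ) ^ 2 / P) ^ 2 :=
    calc bothProb s t ≤ #(s.1 ∩ t.1) * ((K : ℝ) / P) + ((K : ℝ) ^ 2 / P) ^ 2 :=
          bothProb_le hKP hP s t
      _ ≤ K * ((K : ℝ) / P) + ((K : ℝ) ^ 2 / P) ^ 2 := by gcongr
      _ = (K : ℝ) ^ 2 / P + ((K : ℝ) ^ 2 / P) ^ 2 := by ring
      _ ≤ _ := by gcongr; exact sq_div_le_psf hKP hP h5
  have h2 := mul_le_mul_of_nonneg_left h1 (sq_nonneg p)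
  have h3 := sq_mul_sq_div_sq_le (p := p) hKP hP h5
  unfold pef at h3 ⊢
  nlinarith

lemma sq_mul_bothProb_le_of_card_lt_two (hKP : K ≤ P) (hP : 0 < P) (hK : 2 ≤ K)
    (h5 : psf K P ≤ 1 / 5) {s t : KeyRing P K} (h : #(s.1 ∩ t.1) < 2) :
    p ^ 2 * bothProb s t ≤ 5 / 8 * (p * pef K P p) + 2 * pef K P p ^ 2 := by
  have hcard : (#(s.1 ∩ t.1) : ℝ) ≤ K / 2 := by
    have h1 : (#(s.1 ∩ t.1) : ℝ) ≤ 1 := by exact_mod_cast Nat.le_of_lt_succ h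
    have h2 : (2 : ℝ) ≤ K := by exact_mod_cast hK
    linarith
  have h1 : bothProb s t ≤ 5 / 8 * psf K P + ((K : ℝ) ^ 2 / P) ^ 2 :=
    calc bothProb s t ≤ #(s.1 ∩ t.1) * ((K : ℝ) / P) + ((K : ℝ) ^ 2 / P) ^ 2 :=
          bothProb_le hKP hP s t
      _ ≤ K / 2 * ((K : ℝ) / P) + ((K : ℝ) ^ 2 / P) ^ 2 := by gcongr
      _ = (K : ℝ) ^ 2 / P / 2 + ((K : ℝ) ^ 2 / P) ^ 2 := by ring
      _ ≤ _ := by linarith [sq_div_le_psf hKP hP h5]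
  have h2 := mul_le_mul_of_nonneg_left h1 (sq_nonneg p)
  have h3 := sq_mul_sq_div_sq_le (p := p) hKP hP h5
  unfold pef at h3 ⊢
  nlinarith

/-- Error term carried by pairs of nodes whose key rings meet. -/
def meetError (n q p ps : ℝ) : ℝ := ps * Real.exp (5 / 8 * (n * q * p))

lemma measure_le_jointTarget (hKP : K ≤ P) (hK : 2 ≤ K) (hp0 : 0 < p) (hp1 : p ≤ 1)
    (h5 : psf K P ≤ 1 / 5) (hab : a ≠ b) {l : ℕ} {ε : ℝ} (hε : 0 < ε)
    (hl : l = 0 ∨ ε ≤ n * pef K P p) :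
    (gonMeasure n K P p (degEvent n K P a l ∩ degEvent n K P b l)).toReal ≤
      jointTarget n (pef K P p) l *
        (Real.exp ((4 * l + 4) * pef K P p + 2 * (n * pef K P p ^ 2)) *
          ((1 + 2 * l / n) ^ l + (1 + l / ε) ^ l * (1 + (l / ε) ^ 2) *
            (meetError n (pef K P p) p (psf K P) +
              2 * meetError n (pef K P p) p (psf K P) ^ 2))) := by
  have hV := card_others_add_two hab
  have hP : 0 < P := by omega
  have hn : (0 : ℝ) < n := by rw [← hV]; positivity
  have hM := card_keyRing_pos hKP
  have hps : 0 < psf K P := psf_pos hKP (by omega)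
  set q := pef K P p with hq
  have hq0 : 0 < q := mul_pos hp0 hps
  have hq1 : 2 * q ≤ 1 := by
    have : q ≤ psf K P := pef_le_psf hp1
    linarith
  set T := jointTarget n q l
  have hT : 0 < T := jointTarget_pos hn hq0 l
  set F := Real.exp ((4 * l + 4) * q + 2 * (n * q ^ 2)) with hF
  set C : ℝ := (1 + l / ε) ^ l * (1 + (l / ε) ^ 2) with hC
  have hC0 : 0 < C := by positivity
  set w := Real.exp (5 / 8 * (n * q * p)) with hw
  have hz : meetError n q p (psf K P) = psf K P * w := rfl
  rw [measure_eq_sum_condProb hKP hp0.le hp1 hab l]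
  refine sum_inv_card_mul_le hKP fun s => ?_
  have hpoint : ∀ t : KeyRing P K,
      condProb {i : Fin n // i ≠ a ∧ i ≠ b} p (p ^ 2 * bothProb s t) q (hits s t) l ≤
        T * F * ((1 + 2 * l / n) ^ l + C * w * (if hits s t then 1 else 0) +
          C * w ^ 2 * (if 2 ≤ #(s.1 ∩ t.1) then 1 else 0)) := by
    intro t
    have hb0 : 0 ≤ p ^ 2 * bothProb s t := mul_nonneg (sq_nonneg p) (bothProb_nonneg s t)
    have hbq : p ^ 2 * bothProb s t ≤ q := sq_mul_bothProb_le_pef hKP hp0.le hp1 s t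
    have hnn : (0 : ℝ) ≤ (1 + 2 * l / n) ^ l := by positivity
    by_cases hst : hits s t
    · have h1 := condProb_le hV hp0.le hp1 hb0 hbq hq0 hq1 (hits s t) hε hl
      refine h1.trans ?_
      by_cases h2 : 2 ≤ #(s.1 ∩ t.1)
      · have h3 : Real.exp ((4 * l + 4) * q + n * (p ^ 2 * bothProb s t)) ≤ F * w ^ 2 := by
          rw [hF, hw, ← Real.exp_nat_mul, ← Real.exp_add]
          refine Real.exp_le_exp.2 ?_
          have := mul_le_mul_of_nonneg_left (sq_mul_bothProb_le (p := p) hKP hP h5 s t) hn.le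
          push_cast
          linarith
        rw [if_pos hst, if_pos h2]
        calc T * (C * Real.exp ((4 * l + 4) * q + n * (p ^ 2 * bothProb s t)))
            ≤ T * (C * (F * w ^ 2)) := by gcongr
          _ = T * F * (C * w ^ 2 * 1) := by ring
          _ ≤ _ := by
            gcongr
            have : 0 ≤ C * w * 1 := by positivity
            linarith
      · have h3 : Real.exp ((4 * l + 4) * q + n * (p ^ 2 * bothProb s t)) ≤ F * w := by
          rw [hF, hw, ← Real.exp_add]
          refine Real.exp_le_exp.2 ?_
          have := mul_le_mul_of_nonneg_left
            (sq_mul_bothProb_le_of_card_lt_two (p := p) hKP hP hK h5 (not_le.1 h2)) hn.le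
          linarith
        rw [if_pos hst, if_neg h2]
        calc T * (C * Real.exp ((4 * l + 4) * q + n * (p ^ 2 * bothProb s t)))
            ≤ T * (C * (F * w)) := by gcongr
          _ = T * F * (C * w * 1) := by ring
          _ ≤ _ := by
            gcongr
            linarith
    · have h2 : ¬ 2 ≤ #(s.1 ∩ t.1) := by
        rw [not_nonempty_iff_eq_empty.1 hst]; simp
      rw [condProb_of_not hst, if_neg hst, if_neg h2, mul_zero, mul_zero, add_zero, add_zero,
        mul_assoc]
      have h3 := sq_mul_bothProb_le_of_not_hits (p := p) hKP hP h5 hst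
      refine (pairProb_le_jointTarget hV hb0 hbq hq0 hq1 l).trans ?_
      have h4 : (l : ℝ) * (p ^ 2 * bothProb s t) / (n * q ^ 2) ≤ 2 * l / n := by
        calc (l : ℝ) * (p ^ 2 * bothProb s t) / (n * q ^ 2)
            ≤ l * (2 * q ^ 2) / (n * q ^ 2) := by gcongr
          _ = _ := by field_simp
      have h6 : Real.exp ((4 * l + 4) * q + n * (p ^ 2 * bothProb s t)) ≤ F := by
        refine Real.exp_le_exp.2 ?_
        have := mul_le_mul_of_nonneg_left h3 hn.le
        linarith
      gcongr
  have h1 : ∑ t : KeyRing P K, (if hits s t then (1 : ℝ) else 0) =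
      psf K P * Fintype.card (KeyRing P K) := by rw [sum_boole, card_hits hKP]
  have h2 : ∑ t : KeyRing P K, (if 2 ≤ #(s.1 ∩ t.1) then (1 : ℝ) else 0) ≤
      2 * psf K P ^ 2 * Fintype.card (KeyRing P K) := by
    rw [sum_boole]
    refine (card_two_le_inter_le hKP hP s).trans ?_
    gcongr
    have := sq_mul_sq_div_sq_le (p := 1) hKP hP h5
    simpa [pef] using this
  rw [← mul_sum, inv_mul_le_iff₀ hM]
  calc _ ≤ ∑ t : KeyRing P K, T * F * ((1 + 2 * l / n) ^ l + C * w * (if hits s t then 1 else 0) +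
          C * w ^ 2 * (if 2 ≤ #(s.1 ∩ t.1) then 1 else 0)) := sum_le_sum fun t _ => hpoint t
    _ = T * F * (Fintype.card (KeyRing P K) * (1 + 2 * l / n) ^ l +
          C * w * (psf K P * Fintype.card (KeyRing P K)) +
          C * w ^ 2 * ∑ t : KeyRing P K, (if 2 ≤ #(s.1 ∩ t.1) then (1 : ℝ) else 0)) := by
        simp_rw [← mul_sum, sum_add_distrib, ← mul_sum]
        rw [h1, sum_const, card_univ, nsmul_eq_mul]
    _ ≤ T * F * (Fintype.card (KeyRing P K) * (1 + 2 * l / n) ^ l +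
          C * w * (psf K P * Fintype.card (KeyRing P K)) +
          C * w ^ 2 * (2 * psf K P ^ 2 * Fintype.card (KeyRing P K))) := by gcongr
    _ = _ := by rw [hz]; ring

lemma jointTarget_le_measure (hKP : K ≤ P) (hK : 2 ≤ K) (hp0 : 0 < p) (hp1 : p ≤ 1)
    (h5 : psf K P ≤ 1 / 5) (hab : a ≠ b) {l : ℕ} (hl : 2 * l + 2 ≤ n) :
    jointTarget n (pef K P p) l * ((1 - psf K P) *
      ((1 - (2 + 2 * l) / n) ^ (2 * l) * (1 - 2 * pef K P p) ^ (2 * l) *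
        (1 - 4 * (n * pef K P p ^ 2)))) ≤
      (gonMeasure n K P p (degEvent n K P a l ∩ degEvent n K P b l)).toReal := by
  have hV := card_others_add_two hab
  have hP : 0 < P := by omega
  have hM := card_keyRing_pos hKP
  have hq0 : 0 < pef K P p := mul_pos hp0 (psf_pos hKP (by omega))
  have hq1 : 2 * pef K P p ≤ 1 := by
    have : pef K P p ≤ psf K P := pef_le_psf hp1
    linarith
  rw [measure_eq_sum_condProb hKP hp0.le hp1 hab l]
  refine le_sum_inv_card_mul hKP fun s => ?_
  rw [← mul_sum, le_inv_mul_iff₀ hM]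
  set c := jointTarget n (pef K P p) l * ((1 - (2 + 2 * l) / n) ^ (2 * l) *
    (1 - 2 * pef K P p) ^ (2 * l) * (1 - 4 * (n * pef K P p ^ 2))) with hc
  calc _ = c * ((1 - psf K P) * Fintype.card (KeyRing P K)) := by rw [hc]; ring
    _ = ∑ t : KeyRing P K, c * (if ¬ hits s t then 1 else 0) := by
        rw [← mul_sum, sum_boole, card_not_hits hKP]
    _ ≤ _ := by
        refine sum_le_sum fun t _ => ?_
        have hb0 : 0 ≤ p ^ 2 * bothProb s t := mul_nonneg (sq_nonneg p) (bothProb_nonneg s t)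
        by_cases hst : hits s t
        · rw [if_neg (not_not.2 hst), mul_zero]
          exact condProb_nonneg hp0.le hp1 hb0 (sq_mul_bothProb_le_pef hKP hp0.le hp1 s t) hq1 _ l
        · rw [if_pos hst, mul_one, condProb_of_not hst]
          exact jointTarget_le_pairProb hV hb0 (sq_mul_bothProb_le_of_not_hits hKP hP h5 hst)
            hq0 hq1 hl

end MeasureBounds

section Limits

lemma tendsto_sq_mul_exp_div {u : ℕ → ℝ} (hu0 : ∀ᶠ n : ℕ in atTop, 0 ≤ u n)
    (hu : ∀ᶠ n : ℕ in atTop, u n ≤ 3 / 2 * Real.log n) :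
    Tendsto (fun n : ℕ => u n ^ 2 / n * Real.exp (5 / 8 * u n)) atTop (nhds 0) := by
  have hlog : Tendsto (fun n : ℕ => Real.log n / 16) atTop atTop :=
    (Real.tendsto_log_atTop.comp tendsto_natCast_atTop_atTop).atTop_div_const (by norm_num)
  have h1 := ((Real.tendsto_pow_mul_exp_neg_atTop_nhds_zero 2).comp hlog).const_mul (576 : ℝ)
  rw [mul_zero] at h1
  refine tendsto_of_tendsto_of_tendsto_of_le_of_le' tendsto_const_nhds h1
    (Eventually.of_forall fun n => by positivity) ?_
  filter_upwards [hu0, hu, eventually_gt_atTop 0] with n h0 h2 hn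
  have hn' : (0 : ℝ) < n := by exact_mod_cast hn
  calc u n ^ 2 / n * Real.exp (5 / 8 * u n)
      ≤ (3 / 2 * Real.log n) ^ 2 / n * Real.exp (5 / 8 * (3 / 2 * Real.log n)) := by gcongr
    _ = (3 / 2 * Real.log n) ^ 2 *
          (Real.exp (-Real.log n) * Real.exp (5 / 8 * (3 / 2 * Real.log n))) := by
        rw [Real.exp_neg, Real.exp_log hn']
        ring
    _ = 576 * ((Real.log n / 16) ^ 2 * Real.exp (-(Real.log n / 16))) := by
        rw [← Real.exp_add]
        ring_nf

lemma eventually_log_add_le (k : ℕ) {α : ℕ → ℝ} (hα : Tendsto α atTop atBot) :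
    ∀ᶠ n : ℕ in atTop, Real.log n + ((k : ℝ) - 1) * Real.log (Real.log n) + α n ≤
      3 / 2 * Real.log n := by
  have hlog : Tendsto (fun n : ℕ => Real.log n) atTop atTop :=
    Real.tendsto_log_atTop.comp tendsto_natCast_atTop_atTop
  have h1 := (Real.isLittleO_log_id_atTop.comp_tendsto hlog).const_mul_left ((k : ℝ) - 1)
  filter_upwards [h1.bound (show (0 : ℝ) < 1 / 2 by norm_num), hα.eventually_le_atBot 0,
    hlog.eventually_ge_atTop 0] with n h2 h3 h4
  simp only [Function.comp_apply, id, Real.norm_eq_abs, abs_of_nonneg h4] at h2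
  have := (le_abs_self _).trans h2
  linarith

lemma meetError_le {n q p ps : ℝ} (hn : 0 < n) (hp0 : 0 < p) (hp1 : p ≤ 1) (hps : 0 ≤ ps)
    (hq : q = p * ps) :
    meetError n q p ps ≤
      ps * Real.exp (5 / 8) + (n * q) ^ 2 / n * Real.exp (5 / 8 * (n * q)) := by
  have hq0 : 0 ≤ q := hq ▸ mul_nonneg hp0.le hps
  unfold meetError
  rcases le_total (n * q * p) 1 with h | h
  · calc ps * Real.exp (5 / 8 * (n * q * p)) ≤ ps * Real.exp (5 / 8) := by
          gcongr
          linarith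
      _ ≤ _ := le_add_of_nonneg_right (by positivity)
  · have h1 : ps ≤ (n * q) ^ 2 / n := by
      calc ps ≤ ps * (n * q * p) := le_mul_of_one_le_right hps h
        _ = (n * q) ^ 2 / n := by rw [hq]; field_simp
    have h2 : n * q * p ≤ n * q := mul_le_of_le_one_right (by positivity) hp1
    calc ps * Real.exp (5 / 8 * (n * q * p))
        ≤ (n * q) ^ 2 / n * Real.exp (5 / 8 * (n * q)) := by gcongr
      _ ≤ _ := le_add_of_nonneg_left (by positivity)

/-- Joint degree asymptotics, when either the degree is zero or the mean degree is bounded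
away from zero. -/
lemma tendsto_measure_div_jointTarget
    (k : ℕ) (K P : ℕ → ℕ) (p : ℕ → ℝ)
    (hKP : ∀ n, K n ≤ P n) (hp0 : ∀ n, 0 < p n) (hp1 : ∀ n, p n < 1)
    (hps : Tendsto (fun n : ℕ => psf (K n) (P n)) atTop (nhds 0))
    (hK2 : ∀ᶠ n : ℕ in atTop, 2 ≤ K n)
    (α : ℕ → ℝ)
    (hα : ∀ n : ℕ, 1 ≤ n → pef (K n) (P n) (p n) =
      (Real.log n + ((k : ℝ) - 1) * Real.log (Real.log n) + α n) / (n : ℝ))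
    (hαbot : Tendsto α atTop atBot)
    (x y : ℕ) (hxy : x ≠ y) (l : ℕ) {ε : ℝ} (hε : 0 < ε)
    (hl : ∀ᶠ n : ℕ in atTop, l = 0 ∨ ε ≤ n * pef (K n) (P n) (p n)) :
    Tendsto (fun n : ℕ =>
      (gonMeasure n (K n) (P n) (p n)
        (degEvent n (K n) (P n) x l ∩ degEvent n (K n) (P n) y l)).toReal /
          jointTarget n (pef (K n) (P n) (p n)) l) atTop (nhds 1) := by
  set q : ℕ → ℝ := fun n => pef (K n) (P n) (p n) with hqdef
  set σ : ℕ → ℝ := fun n => psf (K n) (P n) with hσdef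
  have hq0 : ∀ n, 0 ≤ q n := fun n => pef_nonneg (hp0 n).le
  have hq : Tendsto q atTop (nhds 0) :=
    squeeze_zero hq0 (fun n => pef_le_psf (hp1 n).le) hps
  have hmean : Tendsto (fun n : ℕ => (n * q n) ^ 2 / n * Real.exp (5 / 8 * (n * q n))) atTop
      (nhds 0) := by
    refine tendsto_sq_mul_exp_div
      (Eventually.of_forall fun n => mul_nonneg (Nat.cast_nonneg n) (hq0 n)) ?_
    filter_upwards [eventually_log_add_le k hαbot, eventually_ge_atTop 1] with n h1 h2
    have hn : (0 : ℝ) < n := by exact_mod_cast h2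
    simp only [hqdef]
    rwa [hα n h2, mul_div_cancel₀ _ hn.ne']
  have hnq : Tendsto (fun n : ℕ => n * q n ^ 2) atTop (nhds 0) := by
    refine tendsto_of_tendsto_of_tendsto_of_le_of_le' tendsto_const_nhds hmean
      (Eventually.of_forall fun n => by positivity) ?_
    filter_upwards [eventually_gt_atTop 0] with n hn
    have hn' : (0 : ℝ) < n := by exact_mod_cast hn
    have h1 : (n * q n) ^ 2 / n = n * q n ^ 2 := by field_simp
    rw [h1]
    refine le_mul_of_one_le_right (by positivity) (Real.one_le_exp ?_)
    have := hq0 n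
    positivity
  have hz : Tendsto (fun n : ℕ => meetError n (q n) (p n) (σ n)) atTop (nhds 0) := by
    have h1 := (hps.mul_const (Real.exp (5 / 8))).add hmean
    rw [zero_mul, zero_add] at h1
    refine tendsto_of_tendsto_of_tendsto_of_le_of_le' tendsto_const_nhds h1
      (Eventually.of_forall fun n => mul_nonneg (psf_nonneg _ _) (Real.exp_pos _).le) ?_
    filter_upwards [eventually_gt_atTop 0] with n hn
    exact meetError_le (by exact_mod_cast hn) (hp0 n) (hp1 n).le (psf_nonneg _ _) rfl
  have hconst : ∀ c : ℝ, Tendsto (fun n : ℕ => c / n) atTop (nhds 0) :=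
    tendsto_const_div_atTop_nhds_zero_nat
  have hlower : Tendsto (fun n : ℕ => (1 - σ n) *
      ((1 - (2 + 2 * l) / n) ^ (2 * l) * (1 - 2 * q n) ^ (2 * l) *
        (1 - 4 * (n * q n ^ 2)))) atTop (nhds 1) := by
    have h := (hps.const_sub 1).mul (((((hconst (2 + 2 * l)).const_sub 1).pow (2 * l)).mul
      (((hq.const_mul 2).const_sub 1).pow (2 * l))).mul ((hnq.const_mul 4).const_sub 1))
    simpa using h
  have hupper : Tendsto (fun n : ℕ => Real.exp ((4 * l + 4) * q n + 2 * (n * q n ^ 2)) *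
      ((1 + 2 * l / n) ^ l + (1 + l / ε) ^ l * (1 + (l / ε) ^ 2) *
        (meetError n (q n) (p n) (σ n) + 2 * meetError n (q n) (p n) (σ n) ^ 2))) atTop
      (nhds 1) := by
    have h1 := (Real.continuous_exp.tendsto _).comp
      ((hq.const_mul (4 * l + 4 : ℝ)).add (hnq.const_mul 2))
    have h2 := (((hconst (2 * l)).const_add 1).pow l).add
      ((hz.add ((hz.pow 2).const_mul 2)).const_mul ((1 + l / ε) ^ l * (1 + (l / ε) ^ 2)))
    simpa using h1.mul h2
  have hgood : ∀ᶠ n : ℕ in atTop, 0 < jointTarget n (q n) l ∧ 2 ≤ K n ∧ σ n ≤ 1 / 5 ∧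
      x < n ∧ y < n := by
    filter_upwards [hK2, hps.eventually_le_const (show (0 : ℝ) < 1 / 5 by norm_num),
      eventually_gt_atTop x, eventually_gt_atTop y] with n h1 h2 h3 h4
    refine ⟨jointTarget_pos (by exact_mod_cast (Nat.zero_le x).trans_lt h3) ?_ l, h1, h2, h3, h4⟩
    exact mul_pos (hp0 n) (psf_pos (hKP n) (by omega))
  refine tendsto_of_tendsto_of_tendsto_of_le_of_le' hlower hupper ?_ ?_
  · filter_upwards [hgood, eventually_ge_atTop (2 * l + 2)] with n ⟨hT, hK, h5, hx, hy⟩ hn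
    rw [le_div_iff₀' hT]
    exact jointTarget_le_measure (a := ⟨x, hx⟩) (b := ⟨y, hy⟩) (hKP n) hK (hp0 n) (hp1 n).le h5
      (by simpa using hxy) hn
  · filter_upwards [hgood, hl] with n ⟨hT, hK, h5, hx, hy⟩ hn
    rw [div_le_iff₀' hT]
    exact measure_le_jointTarget (a := ⟨x, hx⟩) (b := ⟨y, hy⟩) (hKP n) hK (hp0 n) (hp1 n).le h5
      (by simpa using hxy) hε hn

end Limits

/-- joint degree asymptotics for two distinct nodes in `𝔾_on`. -/
theorem gon_joint_degree_asymptotics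
    (k : ℕ) (hk : 1 ≤ k) (K P : ℕ → ℕ) (p : ℕ → ℝ)
    (hKP : ∀ n, K n ≤ P n) (hp0 : ∀ n, 0 < p n) (hp1 : ∀ n, p n < 1)
    (hps : Tendsto (fun n : ℕ => psf (K n) (P n)) atTop (nhds 0))
    (hK2 : ∀ᶠ n : ℕ in atTop, 2 ≤ K n)
    (α : ℕ → ℝ)
    (hα : ∀ n : ℕ, 1 ≤ n → pef (K n) (P n) (p n) =
      (Real.log n + ((k : ℝ) - 1) * Real.log (Real.log n) + α n) / (n : ℝ))
    (hαbot : Tendsto α atTop atBot)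
    (x y : ℕ) (hxy : x ≠ y) :
    -- (a)
    ((∃ ε : ℝ, 0 < ε ∧ ∀ᶠ n : ℕ in atTop, ε < (n : ℝ) * pef (K n) (P n) (p n)) →
      ∀ ℓ : ℕ, Tendsto (fun n : ℕ =>
          (gonMeasure n (K n) (P n) (p n)
              (degEvent n (K n) (P n) x ℓ ∩ degEvent n (K n) (P n) y ℓ)).toReal /
            ((1 / (ℓ.factorial : ℝ) ^ 2) * (pef (K n) (P n) (p n) * (n : ℝ)) ^ (2 * ℓ) *
              Real.exp (-2 * (pef (K n) (P n) (p n) * (n : ℝ)))))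
        atTop (nhds 1)) ∧
    -- (b)
    Tendsto (fun n : ℕ =>
        (gonMeasure n (K n) (P n) (p n)
            (degEvent n (K n) (P n) x 0 ∩ degEvent n (K n) (P n) y 0)).toReal /
          Real.exp (-2 * (pef (K n) (P n) (p n) * (n : ℝ))))
      atTop (nhds 1) := by
  refine ⟨fun ⟨ε, hε, hmean⟩ ℓ => ?_, ?_⟩
  · exact tendsto_measure_div_jointTarget k K P p hKP hp0 hp1 hps hK2 α hα hαbot x y hxy ℓ hε
      (hmean.mono fun n hn => Or.inr hn.le)
  · simpa [jointTarget] using tendsto_measure_div_jointTarget k K P p hKP hp0 hp1 hps hK2 α hα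
      hαbot x y hxy 0 one_pos (Eventually.of_forall fun n => Or.inl rfl)
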